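/- Let Φ be irreducible reduced, not of type A or G₂, and let β = Σᵢbᵢαᵢ with β ≥ Σᵢαᵢ (so all bᵢ ≥ 1). Write β = Σᵢaᵢωᵢ in fundamental weights. Let I(β) be the set of irreducible subsets I ⊆ [ℓ] not of type A with β ≥ θ_I. Assume ht₀⁺(β) ≤ 2 and [ℓ] ∉ I(β). Then there exists I ∈ I(β) such that the coefficient a_{f(I)} > 0, where f(I) is the unique index such that θ_I = ω_{f(I)} − η for some dominant η with support disjoint from I. -/

import Mathlib

open scoped RealInnerProductSpace

noncomputable section

variable {E : Type*} [NormedAddCommGroup E] [InnerProductSpace ℝ E]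

/-- The pairing `⟨x, α∨⟩ = 2(x,α)/(α,α)`. -/
def cpair (x α : E) : ℝ := 2 * ⟪x, α⟫ / ⟪α, α⟫

/-- Reflection in the hyperplane orthogonal to `α`. -/
def wrefl (α x : E) : E := x - cpair x α • α

/-- An irreducible reduced root system with a chosen base `simple : Fin ℓ → E`. -/
structure RootSystemData (ℓ : ℕ) (E : Type*) [NormedAddCommGroup E]
    [InnerProductSpace ℝ E] where
  roots : Finset E
  simple : Fin ℓ → E
  simple_mem : ∀ i, simple i ∈ roots
  root_ne_zero : ∀ α ∈ roots, α ≠ 0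
  reduced : ∀ α ∈ roots, (2 : ℝ) • α ∉ roots
  cpair_int : ∀ α ∈ roots, ∀ β ∈ roots, ∃ n : ℤ, cpair β α = (n : ℝ)
  reflect_mem : ∀ α ∈ roots, ∀ β ∈ roots, wrefl α β ∈ roots
  simple_indep : LinearIndependent ℝ simple
  root_decomp : ∀ α ∈ roots,
    (∃ c : Fin ℓ → ℕ, α = ∑ i, (c i : ℝ) • simple i) ∨
    (∃ c : Fin ℓ → ℕ, α = -∑ i, (c i : ℝ) • simple i)
  irred : ∀ S : Finset (Fin ℓ), S.Nonempty →
    (∀ i ∈ S, ∀ j ∉ S, ⟪simple i, simple j⟫ = 0) → S = Finset.univ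

namespace RootSystemData

variable {ℓ : ℕ} (R : RootSystemData ℓ E)

/-- Integral weights. -/
def IsIntegral (x : E) : Prop := ∀ α ∈ R.roots, ∃ n : ℤ, cpair x α = (n : ℝ)

/-- Dominant (integral) weights. -/
def IsDominant (x : E) : Prop :=
  R.IsIntegral x ∧ ∀ i, 0 ≤ cpair x (R.simple i)

/-- The dominant order: `R.wle μ λ` means `μ ≤ λ`, i.e. `λ - μ` is a nonnegative
integer combination of the simple roots. -/
def wle (μ lam : E) : Prop :=
  ∃ c : Fin ℓ → ℕ, lam - μ = ∑ i, (c i : ℝ) • R.simple i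

/-- Minuscule weights: nonzero dominant weights all of whose pairings with roots
lie in `{0, 1, -1}`. -/
def IsMinuscule (x : E) : Prop :=
  R.IsDominant x ∧ x ≠ 0 ∧
  ∀ α ∈ R.roots, cpair x α = 0 ∨ cpair x α = 1 ∨ cpair x α = -1

/-- `y` lies in the Weyl group orbit of `x`. -/
def InWeylOrbit (x y : E) : Prop :=
  ∃ l : List E, (∀ α ∈ l, α ∈ R.roots) ∧ y = l.foldr wrefl x

/-- `R.IsDualOf μ λ` expresses `μ = -w₀ λ`: `μ` is the dominant element of the
Weyl orbit of `-λ`. -/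
def IsDualOf (μ lam : E) : Prop := R.IsDominant μ ∧ R.InWeylOrbit (-lam) μ

/-- Low triples of dominant weights. -/
def LowTriple (lam mu nu : E) : Prop :=
  R.IsDominant lam ∧ R.IsDominant mu ∧ R.IsDominant nu ∧
  (∀ lam' mu' : E, R.IsDominant lam' → R.IsDominant mu' →
    R.wle lam' lam → R.wle mu' mu → R.wle nu (lam' + mu') → lam' = lam ∧ mu' = mu) ∧
  R.wle (nu + ∑ i, R.simple i) (lam + mu)

/-- Covering relation in the poset of dominant weights. -/
def Covers (lam mu : E) : Prop :=
  R.IsDominant lam ∧ R.IsDominant mu ∧ R.wle mu lam ∧ mu ≠ lam ∧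
  ∀ η, R.IsDominant η → R.wle mu η → R.wle η lam → η = mu ∨ η = lam

/-- A root of the subsystem `Φ_I` generated by the simple roots indexed by `I`. -/
def IsRootOf (I : Finset (Fin ℓ)) (β : E) : Prop :=
  β ∈ R.roots ∧ ∃ c : Fin ℓ → ℤ, (∀ i, c i ≠ 0 → i ∈ I) ∧
    β = ∑ i, (c i : ℝ) • R.simple i

/-- A short root of `Φ_I`. -/
def IsShortRootOf (I : Finset (Fin ℓ)) (β : E) : Prop :=
  R.IsRootOf I β ∧ ∀ γ, R.IsRootOf I γ → ⟪β, β⟫ ≤ ⟪γ, γ⟫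

/-- `θ` is the highest short root of `Φ_I`. -/
def IsHighestShortRoot (I : Finset (Fin ℓ)) (θ : E) : Prop :=
  R.IsShortRootOf I θ ∧ ∀ γ, R.IsShortRootOf I γ → R.wle γ θ

/-- `I` indexes a connected (i.e. irreducible) subdiagram of the Dynkin diagram. -/
def Connected (I : Finset (Fin ℓ)) : Prop :=
  I.Nonempty ∧ ∀ S ⊆ I, S.Nonempty →
    (∀ i ∈ S, ∀ j ∈ I, j ∉ S → ⟪R.simple i, R.simple j⟫ = 0) → S = I

/-- `I` is of type A: the Cartan matrix of `Φ_I` is that of a type `A` chain. -/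
def IsTypeASub (I : Finset (Fin ℓ)) : Prop :=
  ∃ e : Fin I.card ≃ {i // i ∈ I}, ∀ a b : Fin I.card,
    cpair (R.simple (e b).1) (R.simple (e a).1) =
      if a = b then 2
      else if (a : ℕ) + 1 = (b : ℕ) ∨ (b : ℕ) + 1 = (a : ℕ) then -1 else 0

/-- The subdiagram indexed by `I` is simply laced. -/
def SimplyLaced (I : Finset (Fin ℓ)) : Prop :=
  ∀ i ∈ I, ∀ j ∈ I, i ≠ j →
    cpair (R.simple i) (R.simple j) = 0 ∨ cpair (R.simple i) (R.simple j) = -1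

end RootSystemData

variable {ℓ : ℕ}

/-- The Cartan matrix of type F₄ (Bourbaki numbering). -/
def F4Cartan : Fin 4 → Fin 4 → ℝ :=
  ![![2, -1, 0, 0], ![-1, 2, -1, 0], ![0, -2, 2, -1], ![0, 0, -1, 2]]

/-- `R` is of type F₄. -/
def RootSystemData.IsF4 (R : RootSystemData ℓ E) : Prop :=
  ∃ e : Fin 4 ≃o Fin ℓ, ∀ a b : Fin 4,
    cpair (R.simple (e b)) (R.simple (e a)) = F4Cartan a b

lemma cpair_mul_self {x α : E} (hα : α ≠ 0) : cpair x α * ⟪α, α⟫ = 2 * ⟪x, α⟫ := by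
  have : ⟪α, α⟫ ≠ 0 := (real_inner_self_pos.2 hα).ne'
  unfold cpair
  field_simp

namespace RootSystemData

variable (R : RootSystemData ℓ E)

/-- The integer Cartan matrix `⟨αᵢ, αⱼ∨⟩`. -/
def cm (i j : Fin ℓ) : ℤ :=
  Classical.choose (R.cpair_int (R.simple j) (R.simple_mem j) (R.simple i) (R.simple_mem i))

lemma cpair_simple (i j : Fin ℓ) : cpair (R.simple i) (R.simple j) = (R.cm i j : ℝ) :=
  Classical.choose_spec
    (R.cpair_int (R.simple j) (R.simple_mem j) (R.simple i) (R.simple_mem i))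

/-- The squared length of a simple root. -/
def nm (i : Fin ℓ) : ℝ := ⟪R.simple i, R.simple i⟫

lemma nm_pos (i : Fin ℓ) : 0 < R.nm i :=
  real_inner_self_pos.2 (R.root_ne_zero _ (R.simple_mem i))

lemma two_inner_simple (i j : Fin ℓ) :
    2 * ⟪R.simple i, R.simple j⟫ = R.cm i j * R.nm j := by
  rw [← cpair_simple, nm, cpair_mul_self (R.root_ne_zero _ (R.simple_mem j))]

lemma cm_mul_nm_comm (i j : Fin ℓ) : R.cm i j * R.nm j = R.cm j i * R.nm i := by
  rw [← two_inner_simple, ← two_inner_simple, real_inner_comm]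

lemma cm_self (i : Fin ℓ) : R.cm i i = 2 := by
  have h := R.two_inner_simple i i
  have h2 : (R.cm i i : ℝ) = 2 := by
    have := R.nm_pos i
    apply mul_right_cancel₀ this.ne'
    rw [← h, nm]
  exact_mod_cast h2

lemma cm_eq_zero_iff_inner (i j : Fin ℓ) : R.cm i j = 0 ↔ ⟪R.simple i, R.simple j⟫ = 0 := by
  have h := R.two_inner_simple i j
  have := R.nm_pos j
  constructor
  · intro h0
    rw [h0] at h
    simpa using h
  · intro h0
    rw [h0, mul_zero] at h
    exact_mod_cast (mul_eq_zero.1 h.symm).resolve_right this.ne'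

lemma cm_eq_zero_comm (i j : Fin ℓ) : R.cm i j = 0 ↔ R.cm j i = 0 := by
  rw [cm_eq_zero_iff_inner, cm_eq_zero_iff_inner, real_inner_comm]

lemma coeff_ext {g h : Fin ℓ → ℝ} (hgh : ∑ i, g i • R.simple i = ∑ i, h i • R.simple i) :
    g = h := by
  have := Fintype.linearIndependent_iff.1 R.simple_indep (fun i => g i - h i)
    (by simp only [sub_smul, Finset.sum_sub_distrib, hgh, sub_self])
  funext i
  linarith [this i]

/-- The element of the root lattice with the given coefficients. -/
def vec (c : Fin ℓ → ℕ) : E := ∑ i, (c i : ℝ) • R.simple i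

lemma vec_add (c d : Fin ℓ → ℕ) : R.vec (c + d) = R.vec c + R.vec d := by
  simp [vec, add_smul, Finset.sum_add_distrib]

lemma vec_single (j : Fin ℓ) : R.vec (Pi.single j 1) = R.simple j := by
  rw [vec, Finset.sum_eq_single j]
  · simp
  · intro i _ hi
    simp [hi]
  · simp

lemma vec_injective : Function.Injective R.vec := by
  intro c d h
  have := R.coeff_ext h
  funext i
  exact_mod_cast congrFun this i

lemma vec_zero : R.vec 0 = 0 := by simp [vec]

lemma vec_pos {c : Fin ℓ → ℕ} (hc : c ≠ 0) : 0 < ⟪R.vec c, R.vec c⟫ :=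
  real_inner_self_pos.2 fun h => hc (R.vec_injective (h.trans R.vec_zero.symm))

/-- The pairing of `vec c` with the `i`-th simple coroot. -/
def prg (c : Fin ℓ → ℕ) (i : Fin ℓ) : ℤ := ∑ j, (c j : ℤ) * R.cm j i

lemma prg_add (c d : Fin ℓ → ℕ) (i : Fin ℓ) : R.prg (c + d) i = R.prg c i + R.prg d i := by
  simp [prg, add_mul, Finset.sum_add_distrib]

lemma two_inner_vec_simple (c : Fin ℓ → ℕ) (i : Fin ℓ) :
    2 * ⟪R.vec c, R.simple i⟫ = R.prg c i * R.nm i := by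
  simp only [vec, prg, sum_inner, Finset.mul_sum, Int.cast_sum, Finset.sum_mul]
  refine Finset.sum_congr rfl fun j _ => ?_
  rw [real_inner_smul_left]
  push_cast
  linear_combination (c j : ℝ) * R.two_inner_simple j i

lemma cpair_vec (c : Fin ℓ → ℕ) (i : Fin ℓ) : cpair (R.vec c) (R.simple i) = R.prg c i := by
  apply mul_right_cancel₀ (R.nm_pos i).ne'
  rw [← two_inner_vec_simple, nm, cpair_mul_self (R.root_ne_zero _ (R.simple_mem i))]

lemma inner_vec_right (c : Fin ℓ → ℕ) (x : E) :
    ⟪x, R.vec c⟫ = ∑ i, (c i : ℝ) * ⟪x, R.simple i⟫ := by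
  simp only [vec, inner_sum, real_inner_smul_right]

lemma neg_one_le_prg {c : Fin ℓ → ℕ} {j : Fin ℓ} (hj : c j = 0)
    (hn : ⟪R.vec c, R.vec c⟫ ≤ R.nm j) : -1 ≤ R.prg c j := by
  have h0 : c + Pi.single j 1 ≠ 0 := fun h => by simpa [hj] using congrFun h j
  have h1 := R.vec_pos h0
  rw [vec_add, vec_single, real_inner_add_add_self] at h1
  have h2 := R.two_inner_vec_simple c j
  have h3 := R.nm_pos j
  have h4 : ⟪R.simple j, R.simple j⟫ = R.nm j := rfl
  have h5 : (0 : ℝ) < (R.prg c j + 2) * R.nm j := by linarith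
  have h6 : (0 : ℝ) < R.prg c j + 2 := pos_of_mul_pos_left h5 h3.le
  have h7 : 0 < R.prg c j + 2 := by exact_mod_cast h6
  omega

lemma nm_lt_of_prg_eq {c : Fin ℓ → ℕ} {j : Fin ℓ} (hj : c j = 0) (hp : R.prg c j = -1) :
    R.nm j < 4 * ⟪R.vec c, R.vec c⟫ := by
  have h0 : (c + c) + Pi.single j 1 ≠ 0 := fun h => by simpa [hj] using congrFun h j
  have h1 := R.vec_pos h0
  rw [vec_add, vec_single, real_inner_add_add_self, vec_add, inner_add_left, inner_add_left,
    inner_add_right] at h1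
  have h2 := R.two_inner_vec_simple c j
  rw [hp] at h2
  push_cast at h2
  have h4 : ⟪R.simple j, R.simple j⟫ = R.nm j := rfl
  linarith

lemma root_neg {α : E} (hα : α ∈ R.roots) : -α ∈ R.roots := by
  have h := R.reflect_mem α hα α hα
  have h2 : cpair α α = 2 := by
    have := (real_inner_self_pos.2 (R.root_ne_zero α hα)).ne'
    unfold cpair
    field_simp
  rw [wrefl, h2, two_smul] at h
  simpa using h

lemma cm_nonpos {i j : Fin ℓ} (hij : i ≠ j) : R.cm i j ≤ 0 := by
  have h := R.reflect_mem _ (R.simple_mem j) _ (R.simple_mem i)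
  rw [wrefl, cpair_simple] at h
  have e : R.simple i - (R.cm i j : ℝ) • R.simple j =
      ∑ l, ((Pi.single i 1 : Fin ℓ → ℝ) l - R.cm i j * (Pi.single j 1 : Fin ℓ → ℝ) l) •
        R.simple l := by
    simp [sub_smul, Finset.sum_sub_distrib, Pi.single_apply, ite_smul]
  rcases R.root_decomp _ h with ⟨c, hc⟩ | ⟨c, hc⟩
  · rw [e] at hc
    have := congrFun (R.coeff_ext hc) j
    simp [hij.symm] at this
    have h3 : (R.cm i j : ℝ) ≤ 0 := by
      have : (0 : ℝ) ≤ c j := Nat.cast_nonneg _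
      linarith
    exact_mod_cast h3
  · rw [e, ← Finset.sum_neg_distrib] at hc
    simp only [← neg_smul] at hc
    have := congrFun (R.coeff_ext hc) i
    simp [hij] at this
    have : (0 : ℝ) ≤ c i := Nat.cast_nonneg _
    linarith

lemma cm_mul_cm_lt {i j : Fin ℓ} (hij : i ≠ j) : R.cm i j * R.cm j i < 4 := by
  have hi := R.nm_pos i
  have hj := R.nm_pos j
  have hli := R.two_inner_simple i j
  have hcomm := R.cm_mul_nm_comm i j
  have hne : (2 : ℝ) • R.simple i - (R.cm i j : ℝ) • R.simple j ≠ 0 := by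
    intro h
    have e : (2 : ℝ) • R.simple i - (R.cm i j : ℝ) • R.simple j =
        ∑ l, (2 * (Pi.single i 1 : Fin ℓ → ℝ) l - R.cm i j * (Pi.single j 1 : Fin ℓ → ℝ) l) •
          R.simple l := by
      simp [sub_smul, Finset.sum_sub_distrib, Pi.single_apply, ite_smul]
    have := Fintype.linearIndependent_iff.1 R.simple_indep _ (e.symm.trans h) i
    simp [hij] at this
  have h := real_inner_self_pos.2 hne
  rw [real_inner_sub_sub_self] at h
  simp only [real_inner_smul_left, real_inner_smul_right] at h
  change (0 : ℝ) < 2 * (2 * R.nm i) - _ + _ * (_ * R.nm j) at h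
  have h2 : (0 : ℝ) < (4 - R.cm i j * R.cm j i) * R.nm i := by
    rw [hli, hcomm] at h
    linarith
  have h3 := pos_of_mul_pos_left h2 hi.le
  have h4 : (R.cm i j * R.cm j i : ℝ) < 4 := by linarith
  exact_mod_cast h4

lemma cm_cases (hG2 : ∀ i j : Fin ℓ, cpair (R.simple i) (R.simple j) ≠ -3) {i j : Fin ℓ}
    (hij : i ≠ j) :
    (R.cm i j = 0 ∧ R.cm j i = 0) ∨ (R.cm i j = -1 ∧ R.cm j i = -1) ∨
      (R.cm i j = -1 ∧ R.cm j i = -2) ∨ (R.cm i j = -2 ∧ R.cm j i = -1) := by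
  have h1 := R.cm_nonpos hij
  have h2 := R.cm_nonpos hij.symm
  have h3 := R.cm_mul_cm_lt hij
  have h4 := R.cm_eq_zero_comm i j
  have h5 : R.cm i j ≠ -3 := fun h => hG2 i j (by rw [cpair_simple, h]; norm_num)
  have h6 : R.cm j i ≠ -3 := fun h => hG2 j i (by rw [cpair_simple, h]; norm_num)
  by_cases h0 : R.cm i j = 0
  · exact Or.inl ⟨h0, h4.1 h0⟩
  have h0' : R.cm j i ≠ 0 := fun h => h0 (h4.2 h)
  have h7 : -3 ≤ R.cm i j := by nlinarith [show R.cm j i ≤ -1 by omega]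
  have h8 : -3 ≤ R.cm j i := by nlinarith [show R.cm i j ≤ -1 by omega]
  generalize R.cm i j = x at *
  generalize R.cm j i = y at *
  interval_cases x <;> interval_cases y <;> simp_all

lemma inner_self_vec (c : Fin ℓ → ℕ) :
    ⟪R.vec c, R.vec c⟫ = ∑ i, (c i : ℝ) * ⟪R.vec c, R.simple i⟫ := R.inner_vec_right c _

lemma exists_inner_pos {c : Fin ℓ → ℕ} (hc : c ≠ 0) :
    ∃ i, c i ≠ 0 ∧ 0 < ⟪R.vec c, R.simple i⟫ := by
  by_contra! h
  have h1 := R.vec_pos hc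
  rw [inner_self_vec] at h1
  refine absurd h1 (not_lt.2 (Finset.sum_nonpos fun i _ => ?_))
  by_cases h0 : c i = 0
  · simp [h0]
  · exact mul_nonpos_of_nonneg_of_nonpos (Nat.cast_nonneg _) (h i h0)

lemma wrefl_self_inv (i : Fin ℓ) (x : E) : wrefl (R.simple i) (wrefl (R.simple i) x) = x := by
  have h := R.cpair_simple i i
  rw [cm_self] at h
  have h2 : cpair (wrefl (R.simple i) x) (R.simple i) = - cpair x (R.simple i) := by
    apply mul_right_cancel₀ (R.nm_pos i).ne'
    rw [nm, cpair_mul_self (R.root_ne_zero _ (R.simple_mem i)), neg_mul,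
      cpair_mul_self (R.root_ne_zero _ (R.simple_mem i)), wrefl, inner_sub_left,
      real_inner_smul_left]
    linarith [cpair_mul_self (x := x) (R.root_ne_zero _ (R.simple_mem i))]
  rw [wrefl, h2, wrefl]
  simp

lemma inner_wrefl (i : Fin ℓ) (x y : E) :
    ⟪wrefl (R.simple i) x, wrefl (R.simple i) y⟫ = ⟪x, y⟫ := by
  have hx := cpair_mul_self (x := x) (R.root_ne_zero _ (R.simple_mem i))
  have hy := cpair_mul_self (x := y) (R.root_ne_zero _ (R.simple_mem i))
  simp only [wrefl, inner_sub_left, inner_sub_right, real_inner_smul_left, real_inner_smul_right]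
  rw [real_inner_comm y (R.simple i)]
  linear_combination (cpair x (R.simple i) * hy + cpair y (R.simple i) * hx) / 2

/-- A nonzero element of the positive cone that is no longer than any simple root is a root,
of the same length as some simple root. -/
lemma vec_mem_roots_of_short (n : ℕ) : ∀ c : Fin ℓ → ℕ, ∑ i, c i = n → c ≠ 0 →
    (∀ i, ⟪R.vec c, R.vec c⟫ ≤ R.nm i) →
    R.vec c ∈ R.roots ∧ ∃ i, ⟪R.vec c, R.vec c⟫ = R.nm i := by
  induction n with
  | zero =>
    intro c hs hc _
    exact absurd (funext fun i => (Finset.sum_eq_zero_iff.1 hs) i (Finset.mem_univ i)) hc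
  | succ n ih =>
    intro c hs hc hn
    obtain ⟨i, hi, hpos⟩ := R.exists_inner_pos hc
    obtain ⟨d, rfl⟩ : ∃ d : Fin ℓ → ℕ, c = d + (Pi.single i 1 : Fin ℓ → ℕ) := by
      refine ⟨c - (Pi.single i 1 : Fin ℓ → ℕ), funext fun j => ?_⟩
      by_cases hj : j = i
      · subst hj
        simp
        omega
      · simp [hj]
    by_cases hd : d = 0
    · subst hd
      rw [zero_add, vec_single]
      exact ⟨R.simple_mem i, i, rfl⟩
    have hnd := R.vec_pos hd
    have hp := R.two_inner_vec_simple (d + Pi.single i 1) i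
    have hni := R.nm_pos i
    have hk : R.prg (d + Pi.single i 1) i = 1 := by
      have h1 : (0 : ℝ) < R.prg (d + Pi.single i 1) i * R.nm i := by rw [← hp]; linarith
      have h2 : (0 : ℝ) < R.prg (d + Pi.single i 1) i := pos_of_mul_pos_left h1 hni.le
      have h3 : 0 < R.prg (d + Pi.single i 1) i := by exact_mod_cast h2
      have h4 : R.prg (d + Pi.single i 1) i < 2 := by
        by_contra! h
        have h5 : (2 : ℝ) ≤ R.prg (d + Pi.single i 1) i := by exact_mod_cast h
        have h6 := hn i
        rw [vec_add, vec_single, real_inner_add_add_self] at h6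
        rw [vec_add, vec_single, inner_add_left] at hp
        have h7 : ⟪R.simple i, R.simple i⟫ = R.nm i := rfl
        nlinarith
      omega
    have hrefl : wrefl (R.simple i) (R.vec (d + Pi.single i 1)) = R.vec d := by
      rw [wrefl, cpair_vec, hk, vec_add, vec_single]
      simp
    have hnorm : ⟪R.vec d, R.vec d⟫ = ⟪R.vec (d + Pi.single i 1), R.vec (d + Pi.single i 1)⟫ := by
      rw [← hrefl, inner_wrefl]
    obtain ⟨hmem, j, hj⟩ := ih d (by simpa [Finset.sum_add_distrib] using hs) hd
      (fun i => hnorm ▸ hn i)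
    refine ⟨?_, j, hnorm ▸ hj⟩
    have := R.reflect_mem _ (R.simple_mem i) _ hmem
    rwa [← hrefl, wrefl_self_inv] at this

/-- A root lattice vector `vec c` pairing to `δ` at `f` with the simple coroots of its support,
and no longer than any simple root. -/
structure Adm (c : Fin ℓ → ℕ) (f : Fin ℓ) : Prop where
  pos : c f ≠ 0
  pair : ∀ i, c i ≠ 0 → R.prg c i = if i = f then 1 else 0
  short : ∀ i, c f * R.nm f ≤ 2 * R.nm i

variable {R}

/-- The support of a coefficient vector. -/
def supp (c : Fin ℓ → ℕ) : Finset (Fin ℓ) := Finset.univ.filter fun i => c i ≠ 0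

lemma mem_supp {c : Fin ℓ → ℕ} {i : Fin ℓ} : i ∈ supp c ↔ c i ≠ 0 := by simp [supp]

namespace Adm

variable {c : Fin ℓ → ℕ} {f : Fin ℓ}

lemma ne_zero (h : R.Adm c f) : c ≠ 0 := fun h0 => h.pos (congrFun h0 f)

lemma inner_of_ne (h : R.Adm c f) {i : Fin ℓ} (hi : c i ≠ 0) (hif : i ≠ f) :
    ⟪R.vec c, R.simple i⟫ = 0 := by
  have := R.two_inner_vec_simple c i
  rw [h.pair i hi, if_neg hif] at this
  simpa using this

lemma two_inner_f (h : R.Adm c f) : 2 * ⟪R.vec c, R.simple f⟫ = R.nm f := by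
  have := R.two_inner_vec_simple c f
  rw [h.pair f h.pos, if_pos rfl] at this
  simpa using this

/-- Inner products against vectors of the span of the support only see the `f` coordinate. -/
lemma inner_sum_eq (h : R.Adm c f) (g : Fin ℓ → ℝ) (hg : ∀ i, g i ≠ 0 → c i ≠ 0) :
    2 * ⟪R.vec c, ∑ i, g i • R.simple i⟫ = g f * R.nm f := by
  rw [inner_sum, Finset.sum_eq_single f]
  · rw [real_inner_smul_right, ← h.two_inner_f]
    ring
  · intro i _ hif
    rw [real_inner_smul_right]
    by_cases hi : g i = 0
    · simp [hi]
    · rw [h.inner_of_ne (hg i hi) hif, mul_zero]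
  · simp

lemma norm_eq (h : R.Adm c f) : 2 * ⟪R.vec c, R.vec c⟫ = c f * R.nm f :=
  h.inner_sum_eq (fun i => (c i : ℝ)) fun i hi h0 => hi (by simp [h0])

lemma norm_le (h : R.Adm c f) (i : Fin ℓ) : ⟪R.vec c, R.vec c⟫ ≤ R.nm i := by
  linarith [h.norm_eq, h.short i]

lemma mem_roots (h : R.Adm c f) : R.vec c ∈ R.roots :=
  (R.vec_mem_roots_of_short _ c rfl h.ne_zero h.norm_le).1

lemma norm_le_root (h : R.Adm c f) {γ : E} (hγ : γ ∈ R.roots) : ⟪R.vec c, R.vec c⟫ ≤ ⟪γ, γ⟫ := by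
  have key : ∀ d : Fin ℓ → ℕ, R.vec d ∈ R.roots → ⟪R.vec c, R.vec c⟫ ≤ ⟪R.vec d, R.vec d⟫ := by
    intro d hd
    by_contra! hlt
    have hd0 : d ≠ 0 := by
      rintro rfl
      exact R.root_ne_zero _ hd R.vec_zero
    obtain ⟨_, i, hi⟩ := R.vec_mem_roots_of_short _ d rfl hd0
      (fun i => hlt.le.trans (h.norm_le i))
    exact absurd (h.norm_le i) (not_le.2 (hi ▸ hlt))
  rcases R.root_decomp γ hγ with ⟨d, rfl⟩ | ⟨d, rfl⟩
  · exact key d hγ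
  · rw [inner_neg_neg]
    exact key d (by simpa [vec] using R.root_neg hγ)

lemma connected (h : R.Adm c f) : R.Connected (supp c) := by
  refine ⟨⟨f, mem_supp.2 h.pos⟩, fun S hS hne horth => ?_⟩
  have key : ∀ T : Finset (Fin ℓ), T ⊆ supp c → f ∉ T →
      (∀ i ∈ T, ∀ j ∈ supp c, j ∉ T → ⟪R.simple i, R.simple j⟫ = 0) → T = ∅ := by
    intro T hT hf ho
    by_contra hne
    obtain ⟨i, hi⟩ := Finset.nonempty_iff_ne_empty.2 hne
    let d : Fin ℓ → ℕ := fun j => if j ∈ T then c j else 0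
    let d' : Fin ℓ → ℕ := fun j => if j ∈ T then 0 else c j
    have hdd : c = d + d' := by
      funext j
      by_cases hj : j ∈ T <;> simp [d, d', hj]
    have hd : d ≠ 0 := fun h0 => mem_supp.1 (hT hi) (by simpa [d, hi] using congrFun h0 i)
    have h1 := R.vec_pos hd
    have h2 : ⟪R.vec d', R.vec d⟫ = 0 := by
      rw [vec, vec, sum_inner]
      refine Finset.sum_eq_zero fun j _ => ?_
      rw [inner_sum]
      refine Finset.sum_eq_zero fun k _ => ?_
      rw [real_inner_smul_left, real_inner_smul_right]
      by_cases hj : j ∈ T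
      · simp [d', hj]
      · by_cases hk : k ∈ T
        · by_cases hcj : c j = 0
          · simp [d', hcj]
          · rw [real_inner_comm, ho k hk j (mem_supp.2 hcj) hj]
            simp
        · simp [d, hk]
    have h3 : 2 * ⟪R.vec c, R.vec d⟫ = (d f : ℝ) * R.nm f :=
      h.inner_sum_eq (fun i => (d i : ℝ)) fun i hi => by
        by_cases hj : i ∈ T
        · exact mem_supp.1 (hT hj)
        · simp [d, hj] at hi
    rw [hdd, vec_add, inner_add_left, h2] at h3
    have h4 : d f = 0 := if_neg hf
    rw [h4] at h3
    norm_num at h3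
    exact h1.ne' (by rw [h3, inner_zero_left])
  by_cases hf : f ∈ S
  · have := key (supp c \ S) Finset.sdiff_subset (by simp [hf]) (by
      intro i hi j hj hjS
      rw [Finset.mem_sdiff] at hi hjS
      rw [real_inner_comm]
      exact horth j (by tauto) i hi.1 hi.2)
    exact Finset.Subset.antisymm hS (Finset.sdiff_eq_empty_iff_subset.1 this)
  · exact absurd (key S hS hf horth) hne.ne_empty

lemma isRootOf (h : R.Adm c f) : R.IsRootOf (supp c) (R.vec c) :=
  ⟨h.mem_roots, fun i => c i, fun i hi => mem_supp.2 (by simpa using hi), by simp [vec]⟩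

lemma isShortRootOf (h : R.Adm c f) : R.IsShortRootOf (supp c) (R.vec c) :=
  ⟨h.isRootOf, fun _ hγ => h.norm_le_root hγ.1⟩

end Adm

lemma exists_inner_pos_of_dual {ω : Fin ℓ → E}
    (hω : ∀ i j, cpair (ω i) (R.simple j) = if i = j then 1 else 0) :
    ∃ w : E, ∀ i, 0 < ⟪w, R.simple i⟫ := by
  refine ⟨∑ i, ω i, fun i => ?_⟩
  rw [sum_inner, Finset.sum_eq_single i]
  · have := cpair_mul_self (x := ω i) (R.root_ne_zero _ (R.simple_mem i))
    rw [hω, if_pos rfl, one_mul] at this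
    have h2 := R.nm_pos i
    rw [nm] at h2
    linarith
  · intro j _ hj
    have := cpair_mul_self (x := ω j) (R.root_ne_zero _ (R.simple_mem i))
    rw [hω, if_neg hj, zero_mul] at this
    linarith
  · simp

lemma inner_vec_pos {w : E} (hw : ∀ i, 0 < ⟪w, R.simple i⟫) {c : Fin ℓ → ℕ} (hc : c ≠ 0) :
    0 < ⟪w, R.vec c⟫ := by
  rw [inner_vec_right]
  obtain ⟨i, hi⟩ := Function.ne_iff.1 hc
  refine Finset.sum_pos' (fun j _ => mul_nonneg (Nat.cast_nonneg _) (hw j).le)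
    ⟨i, Finset.mem_univ i, mul_pos (Nat.cast_pos.2 (Nat.pos_of_ne_zero hi)) (hw i)⟩

lemma cpair_wrefl (i : Fin ℓ) (x y : E) :
    cpair (wrefl (R.simple i) x) (wrefl (R.simple i) y) = cpair x y := by
  rw [cpair, cpair, inner_wrefl, inner_wrefl]

lemma root_eq_vec (α : E) (hα : α ∈ R.roots) :
    ∃ c : Fin ℓ → ℕ, c ≠ 0 ∧ (α = R.vec c ∨ α = -R.vec c) := by
  rcases R.root_decomp α hα with ⟨c, hc⟩ | ⟨c, hc⟩
  · refine ⟨c, ?_, Or.inl hc⟩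
    rintro rfl
    exact R.root_ne_zero α hα (by simp [hc])
  · refine ⟨c, ?_, Or.inr hc⟩
    rintro rfl
    exact R.root_ne_zero α hα (by simp [hc])

/-- A root that is a multiple of a simple root is that simple root, up to sign. -/
lemma eq_one_of_smul_mem {i : Fin ℓ} {m : ℕ} (hm : m ≠ 0)
    (h : (m : ℝ) • R.simple i ∈ R.roots) : m = 1 := by
  obtain ⟨n, hn⟩ := R.cpair_int _ h _ (R.simple_mem i)
  have hm' : (m : ℝ) ≠ 0 := Nat.cast_ne_zero.2 hm
  have h1 : cpair (R.simple i) ((m : ℝ) • R.simple i) = 2 / m := by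
    have h2 := (R.nm_pos i).ne'
    rw [nm] at h2
    rw [cpair, real_inner_smul_right, real_inner_smul_left, real_inner_smul_right]
    field_simp
  rw [h1, div_eq_iff hm'] at hn
  have h3 : (2 : ℤ) = n * m := by exact_mod_cast hn
  have h4 : (m : ℤ) ∣ 2 := ⟨n, by rw [h3, mul_comm]⟩
  have h5 : m ∣ 2 := by exact_mod_cast h4
  rcases (Nat.dvd_prime Nat.prime_two).1 h5 with h6 | h6
  · exact h6
  · subst h6
    exact absurd h (by exact_mod_cast R.reduced _ (R.simple_mem i))

lemma isIntegral_of_simple {w : E} (hw : ∀ i, 0 < ⟪w, R.simple i⟫) {x : E}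
    (hx : ∀ i, ∃ n : ℤ, cpair x (R.simple i) = n) : R.IsIntegral x := by
  classical
  by_contra hbad
  have hneg : ∀ α : E, cpair x (-α) = - cpair x α := fun α => by
    simp [cpair, neg_div]
  let T := R.roots.filter fun α => (¬ ∃ n : ℤ, cpair x α = n) ∧ 0 < ⟪w, α⟫
  have hT : T.Nonempty := by
    rw [IsIntegral] at hbad
    push Not at hbad
    obtain ⟨α, hα, hn⟩ := hbad
    obtain ⟨c, hc, rfl | rfl⟩ := R.root_eq_vec α hα
    · exact ⟨R.vec c, Finset.mem_filter.2 ⟨hα, fun ⟨n, h⟩ => hn n h, inner_vec_pos hw hc⟩⟩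
    · refine ⟨R.vec c, Finset.mem_filter.2 ⟨by simpa using R.root_neg hα, fun ⟨n, h⟩ => ?_,
        inner_vec_pos hw hc⟩⟩
      exact hn (-n) (by rw [hneg, h]; push_cast; rfl)
  obtain ⟨α, hαT, hmin⟩ := T.exists_min_image (fun α => ⟪w, α⟫) hT
  obtain ⟨hα, hn, hpos⟩ := Finset.mem_filter.1 hαT
  obtain ⟨d, hd, rfl | rfl⟩ := R.root_eq_vec α hα
  swap
  · rw [inner_neg_right] at hpos
    linarith [inner_vec_pos hw hd]
  obtain ⟨i, hi, hip⟩ := R.exists_inner_pos hd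
  have hmem := R.reflect_mem _ (R.simple_mem i) _ hα
  have hk := cpair_mul_self (x := R.vec d) (R.root_ne_zero _ (R.simple_mem i))
  have hni := R.nm_pos i
  rw [nm] at hni
  have hkpos : 0 < cpair (R.vec d) (R.simple i) := by
    by_contra! hle
    nlinarith
  have hlt : ⟪w, wrefl (R.simple i) (R.vec d)⟫ < ⟪w, R.vec d⟫ := by
    rw [wrefl, inner_sub_right, real_inner_smul_right]
    nlinarith [hw i]
  have hn' : ¬ ∃ n : ℤ, cpair x (wrefl (R.simple i) (R.vec d)) = n := by
    rintro ⟨n, h⟩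
    obtain ⟨m, hm⟩ := hx i
    obtain ⟨k, hk⟩ := R.cpair_int _ hmem _ (R.simple_mem i)
    refine hn ⟨n - m * k, ?_⟩
    rw [← R.cpair_wrefl i x]
    have : cpair (wrefl (R.simple i) x) (wrefl (R.simple i) (R.vec d)) =
        cpair x (wrefl (R.simple i) (R.vec d)) - cpair x (R.simple i) *
          cpair (R.simple i) (wrefl (R.simple i) (R.vec d)) := by
      rw [wrefl]
      generalize wrefl (R.simple i) (R.vec d) = y
      simp only [cpair, inner_sub_left, real_inner_smul_left]
      ring
    rw [this, h, hm, hk]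
    push_cast
    ring
  obtain ⟨d', hd', h | h⟩ := R.root_eq_vec _ hmem
  · have := hmin _ (Finset.mem_filter.2 ⟨hmem, hn', h ▸ inner_vec_pos hw hd'⟩)
    linarith
  · have hz : ∀ l, l ≠ i → d l = 0 := by
      intro l hl
      have e : ∑ l, ((d l : ℝ) - cpair (R.vec d) (R.simple i) *
          (Pi.single i 1 : Fin ℓ → ℝ) l) • R.simple l = ∑ l, (-(d' l : ℝ)) • R.simple l := by
        simp only [sub_smul, Finset.sum_sub_distrib, neg_smul, Finset.sum_neg_distrib]
        change R.vec d - _ = - R.vec d'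
        rw [← h, wrefl]
        simp [Pi.single_apply, ite_smul]
      have := congrFun (R.coeff_ext e) l
      simp [hl] at this
      exact this.1
    have he : R.vec d = (d i : ℝ) • R.simple i := by
      rw [vec, Finset.sum_eq_single i]
      · intro l _ hl
        simp [hz l hl]
      · simp
    have h1 := R.eq_one_of_smul_mem hi (he ▸ hα)
    rw [he, h1, Nat.cast_one, one_smul] at hn
    exact hn (hx i)

lemma inner_self_lt_add_vec {y : E} {d : Fin ℓ → ℕ} (hd : d ≠ 0)
    (hy : ∀ i, d i ≠ 0 → 0 ≤ ⟪y, R.simple i⟫) :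
    ⟪y, y⟫ < ⟪y + R.vec d, y + R.vec d⟫ := by
  have h1 := R.vec_pos hd
  have h2 : 0 ≤ ⟪y, R.vec d⟫ := by
    rw [inner_vec_right]
    refine Finset.sum_nonneg fun i _ => ?_
    by_cases hi : d i = 0
    · simp [hi]
    · exact mul_nonneg (Nat.cast_nonneg _) (hy i hi)
  rw [real_inner_add_add_self]
  linarith

lemma Adm.eq_of_dominant {c : Fin ℓ → ℕ} {f : Fin ℓ} (h : R.Adm c f) {δ : E}
    (hδ : R.IsShortRootOf (supp c) δ) (hdom : ∀ i ∈ supp c, 0 ≤ ⟪δ, R.simple i⟫) :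
    R.vec c = δ := by
  obtain ⟨⟨hδr, g, hg, hδg⟩, hshort⟩ := hδ
  have hn : ⟪δ, δ⟫ = ⟪R.vec c, R.vec c⟫ :=
    le_antisymm (hshort _ h.isRootOf) (h.norm_le_root hδr)
  have hδpos : 0 < ⟪δ, δ⟫ := real_inner_self_pos.2 (R.root_ne_zero _ hδr)
  have hpos : 0 < ⟪δ, R.vec c⟫ := by
    rw [inner_vec_right]
    have hnn : ∀ i ∈ Finset.univ, 0 ≤ (c i : ℝ) * ⟪δ, R.simple i⟫ := by
      intro i _
      by_cases hi : c i = 0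
      · simp [hi]
      · exact mul_nonneg (Nat.cast_nonneg _) (hdom i (mem_supp.2 hi))
    refine lt_of_le_of_ne (Finset.sum_nonneg hnn) fun h0 => hδpos.ne' ?_
    have hz := (Finset.sum_eq_zero_iff_of_nonneg hnn).1 h0.symm
    conv_lhs => rw [hδg, sum_inner, ← hδg]
    refine Finset.sum_eq_zero fun i _ => ?_
    by_cases hi : g i = 0
    · simp [hi]
    · have hci := mem_supp.1 (hg i hi)
      have := (mul_eq_zero.1 (hz i (Finset.mem_univ i))).resolve_left (by exact_mod_cast hci)
      rw [real_inner_smul_left, real_inner_comm, this, mul_zero]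
  rw [real_inner_comm] at hpos
  by_contra hne
  obtain ⟨k, hk⟩ := R.cpair_int _ hδr _ h.mem_roots
  have hk' := cpair_mul_self (x := R.vec c) (R.root_ne_zero _ hδr)
  rw [hk, real_inner_comm] at hk'
  have hsub := real_inner_self_pos.2 (sub_ne_zero.2 hne)
  rw [real_inner_sub_sub_self, real_inner_comm, ← hn] at hsub
  have hk1 : k = 1 := by
    have h1 : (0 : ℝ) < k := pos_of_mul_pos_left (by rw [hk']; linarith) hδpos.le
    have h2 : (k : ℝ) < 2 := by
      by_contra! hle
      nlinarith
    have h3 : 0 < k := by exact_mod_cast h1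
    have h4 : k < 2 := by exact_mod_cast h2
    omega
  have hroot := R.reflect_mem _ hδr _ h.mem_roots
  rw [wrefl, hk, hk1, Int.cast_one, one_smul] at hroot
  obtain ⟨d, hd, hd'⟩ := R.root_eq_vec _ hroot
  have hcoef : ∀ s : ℝ, R.vec c - δ = s • R.vec d → s ≠ 0 → ∀ i, d i ≠ 0 → c i ≠ 0 := by
    intro s hs hs0 i hi hci
    have e : ∑ l, ((c l : ℝ) - g l) • R.simple l = ∑ l, (s * (d l : ℝ)) • R.simple l := by
      simp only [sub_smul, Finset.sum_sub_distrib, mul_smul, ← Finset.smul_sum]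
      rw [← hδg]
      exact hs
    have h1 := congrFun (R.coeff_ext e) i
    have h2 : g i = 0 := by
      by_contra h3
      exact mem_supp.1 (hg i h3) hci
    simp [hci, h2, hs0, hi] at h1
  rcases hd' with hd' | hd'
  · have := inner_self_lt_add_vec (R := R) (y := δ) hd fun i hi =>
      hdom i (mem_supp.2 (hcoef 1 (by rw [hd', one_smul]) one_ne_zero i hi))
    rw [← hd', add_sub_cancel, hn] at this
    exact lt_irrefl _ this
  · have := inner_self_lt_add_vec (R := R) (y := R.vec c) hd fun i hi => by
      have hci := hcoef (-1) (by rw [hd', neg_one_smul]) (by norm_num) i hi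
      by_cases hif : i = f
      · subst hif
        linarith [h.two_inner_f, R.nm_pos i]
      · rw [h.inner_of_ne hci hif]
    have h2 : R.vec c + R.vec d = δ := by
      rw [sub_eq_iff_eq_add] at hd'
      rw [hd']
      abel
    rw [h2, hn] at this
    exact lt_irrefl _ this

lemma Adm.isHighestShortRoot {w : E} (hw : ∀ i, 0 < ⟪w, R.simple i⟫) {c : Fin ℓ → ℕ}
    {f : Fin ℓ} (h : R.Adm c f) : R.IsHighestShortRoot (supp c) (R.vec c) := by
  classical
  refine ⟨h.isShortRootOf, fun γ hγ => ?_⟩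
  let T := R.roots.filter fun δ => R.IsShortRootOf (supp c) δ ∧ R.wle γ δ
  have hT : T.Nonempty := ⟨γ, Finset.mem_filter.2 ⟨hγ.1.1, hγ, 0, by simp⟩⟩
  obtain ⟨δ, hδT, hmax⟩ := T.exists_max_image (fun δ => ⟪w, δ⟫) hT
  obtain ⟨-, hδ, d, hd⟩ := Finset.mem_filter.1 hδT
  have hdom : ∀ i ∈ supp c, 0 ≤ ⟪δ, R.simple i⟫ := by
    intro i hi
    by_contra! hlt
    obtain ⟨k, hk⟩ := R.cpair_int _ (R.simple_mem i) _ hδ.1.1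
    have hk' := cpair_mul_self (x := δ) (R.root_ne_zero _ (R.simple_mem i))
    have hni := R.nm_pos i
    rw [nm] at hni
    have hk0 : (k : ℝ) < 0 := by
      by_contra! hle
      rw [hk] at hk'
      nlinarith
    have hmem := R.reflect_mem _ (R.simple_mem i) _ hδ.1.1
    obtain ⟨g, hg, hδg⟩ := hδ.1.2
    have hk1 : k < 0 := by exact_mod_cast hk0
    obtain ⟨m, rfl⟩ : ∃ m : ℕ, k = -m := ⟨k.natAbs, by omega⟩
    have hs : wrefl (R.simple i) δ = δ + (m : ℝ) • R.simple i := by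
      rw [wrefl, hk]
      push_cast
      rw [neg_smul, sub_neg_eq_add]
    have hin : wrefl (R.simple i) δ ∈ T := by
      refine Finset.mem_filter.2 ⟨hmem, ⟨⟨hmem, g + Pi.single i (m : ℤ), ?_, ?_⟩, ?_⟩,
        d + Pi.single i m, ?_⟩
      · intro j hj
        by_cases hji : j = i
        · rwa [hji]
        · exact hg j (by simpa [hji] using hj)
      · rw [hs]
        conv_lhs => rw [hδg]
        simp [add_smul, Finset.sum_add_distrib, Pi.single_apply, ite_smul]
      · intro γ hγ
        rw [inner_wrefl]
        exact hδ.2 γ hγ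
      · rw [hs, add_sub_right_comm, hd]
        simp [add_smul, Finset.sum_add_distrib, Pi.single_apply, ite_smul]
    have h1 := hmax _ hin
    rw [hs, inner_add_right, real_inner_smul_right] at h1
    have h2 : (0 : ℝ) < m := by
      push_cast at hk0
      linarith
    nlinarith [hw i]
  rw [h.eq_of_dominant hδ hdom]
  exact ⟨d, hd⟩

/-- The Cartan matrix of a chain `1 - 2 - ⋯` with an extra node `0` attached to the node `r`:
the entries at `(0, r)` and `(r, 0)` are `-x` and `-y`. -/
def mat (r : ℕ) (x y : ℤ) (j i : ℕ) : ℤ :=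
  if j = 0 then (if i = 0 then 2 else if i = r then -x else 0)
  else if i = 0 then (if j = r then -y else 0)
  else if j = i then 2 else if j + 1 = i ∨ i + 1 = j then -1 else 0

lemma eq_sum_range {G : ℕ → ℤ} {n : ℕ} (hG : ∀ j, n ≤ j → G j = 0) (i : ℕ) :
    G i = ∑ j ∈ Finset.range n, if j = i then G j else 0 := by
  by_cases hi : i < n
  · rw [Finset.sum_ite_eq' (Finset.range n) i G, if_pos (Finset.mem_range.2 hi)]
  · rw [hG i (not_lt.1 hi), Finset.sum_eq_zero]
    intro j hj
    rw [if_neg]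
    rintro rfl
    exact hi (Finset.mem_range.1 hj)

lemma sum_mat {r : ℕ} (hr : r ≠ 0) (x y : ℤ) {G : ℕ → ℤ} {n : ℕ} (hG : ∀ j, n ≤ j → G j = 0)
    (i : ℕ) :
    ∑ j ∈ Finset.range n, G j * mat r x y j i =
      if i = 0 then 2 * G 0 - y * G r
      else 2 * G i - (if i = r then x * G 0 else 0) - (if i = 1 then 0 else G (i - 1))
        - G (i + 1) := by
  by_cases h0 : i = 0
  · rw [if_pos h0, eq_sum_range hG 0, eq_sum_range hG r, Finset.mul_sum, Finset.mul_sum,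
      ← Finset.sum_sub_distrib]
    refine Finset.sum_congr rfl fun j _ => ?_
    unfold mat
    split_ifs <;> first | omega | ring
  · have e1 : (if i = r then x * G 0 else 0) =
        ∑ j ∈ Finset.range n, if i = r then x * (if j = 0 then G j else 0) else 0 := by
      split_ifs with h
      · rw [← Finset.mul_sum, ← eq_sum_range hG 0]
      · simp
    have e2 : (if i = 1 then 0 else G (i - 1)) =
        ∑ j ∈ Finset.range n, if i = 1 then 0 else (if j = i - 1 then G j else 0) := by
      split_ifs with h
      · simp
      · rw [← eq_sum_range hG]
    rw [if_neg h0, e1, e2, eq_sum_range hG i, eq_sum_range hG (i + 1), Finset.mul_sum,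
      ← Finset.sum_sub_distrib, ← Finset.sum_sub_distrib, ← Finset.sum_sub_distrib]
    refine Finset.sum_congr rfl fun j _ => ?_
    unfold mat
    split_ifs <;> first | omega | ring

lemma mat_eq_two {r : ℕ} {x y : ℤ} (hx : 0 < x) (hy : 0 < y) {j i : ℕ} (h : mat r x y j i = 2) :
    j = i := by
  unfold mat at h
  split_ifs at h <;> omega

variable (R) in
/-- The map `e` realizes the Cartan matrix `M` on the indices below `n`. -/
structure Emb (M : ℕ → ℕ → ℤ) (n : ℕ) (e : ℕ → Fin ℓ) : Prop where
  cm_eq : ∀ i < n, ∀ j < n, R.cm (e i) (e j) = M i j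
  inj : ∀ i < n, ∀ j < n, e i = e j → i = j

lemma Emb.of_cm {M : ℕ → ℕ → ℤ} {n : ℕ} {e : ℕ → Fin ℓ}
    (h : ∀ i < n, ∀ j < n, R.cm (e i) (e j) = M i j)
    (hM : ∀ i < n, ∀ j < n, M i j = 2 → i = j) : R.Emb M n e :=
  ⟨h, fun i hi j hj hij => hM i hi j hj (by rw [← h i hi j hj, hij, cm_self])⟩

/-- The coefficient vector with value `cc i` at `e i`, for `i < n`, and zero elsewhere. -/
def push (e : ℕ → Fin ℓ) (n : ℕ) (cc : ℕ → ℕ) (x : Fin ℓ) : ℕ :=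
  ∑ i ∈ Finset.range n, if e i = x then cc i else 0

namespace Emb

variable {M : ℕ → ℕ → ℤ} {n : ℕ} {e : ℕ → Fin ℓ}

lemma mono (h : R.Emb M n e) {m : ℕ} (hm : m ≤ n) : R.Emb M m e :=
  ⟨fun i hi j hj => h.cm_eq i (by omega) j (by omega),
    fun i hi j hj => h.inj i (by omega) j (by omega)⟩

lemma le_card (h : R.Emb M n e) : n ≤ ℓ := by
  have := Fintype.card_le_of_injective (fun i : Fin n => e i)
    fun i j hij => Fin.ext (h.inj i i.2 j j.2 hij)
  simpa using this

lemma push_apply (h : R.Emb M n e) (cc : ℕ → ℕ) {i : ℕ} (hi : i < n) :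
    push e n cc (e i) = cc i := by
  rw [push, Finset.sum_eq_single i]
  · simp
  · intro j hj hji
    rw [if_neg]
    exact fun hij => hji (h.inj j (Finset.mem_range.1 hj) i hi hij)
  · intro h'
    exact absurd (Finset.mem_range.2 hi) h'

lemma exists_of_push_ne {cc : ℕ → ℕ} {x : Fin ℓ} (hx : push e n cc x ≠ 0) :
    ∃ i < n, e i = x := by
  rw [push] at hx
  obtain ⟨i, hi, hne⟩ := Finset.exists_ne_zero_of_sum_ne_zero hx
  refine ⟨i, Finset.mem_range.1 hi, ?_⟩
  by_contra hne'
  exact hne (if_neg hne')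

lemma push_eq_zero {cc : ℕ → ℕ} {x : Fin ℓ} (hx : ∀ i < n, e i ≠ x) : push e n cc x = 0 := by
  by_contra h
  obtain ⟨i, hi, rfl⟩ := exists_of_push_ne h
  exact hx i hi rfl

lemma sum_eq (h : R.Emb M n e) (g : Fin ℓ → ℤ) (hg : ∀ x, g x ≠ 0 → ∃ i < n, e i = x) :
    ∑ x, g x = ∑ i ∈ Finset.range n, g (e i) := by
  classical
  rw [← Finset.sum_image (f := g) (g := e) (s := Finset.range n)]
  · symm
    refine Finset.sum_subset (Finset.subset_univ _) fun x _ hx => ?_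
    by_contra hne
    obtain ⟨i, hi, rfl⟩ := hg x hne
    exact hx (Finset.mem_image.2 ⟨i, Finset.mem_range.2 hi, rfl⟩)
  · intro i hi j hj hij
    exact h.inj i (by simpa using hi) j (by simpa using hj) hij

lemma prg_eq_sum (h : R.Emb M n e) {c : Fin ℓ → ℕ} (hc : ∀ x, c x ≠ 0 → ∃ i < n, e i = x)
    (y : Fin ℓ) : R.prg c y = ∑ j ∈ Finset.range n, (c (e j) : ℤ) * R.cm (e j) y := by
  rw [prg, h.sum_eq]
  intro x hx
  exact hc x fun h0 => hx (by simp [h0])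

lemma prg_eq (h : R.Emb M n e) {c : Fin ℓ → ℕ} (hc : ∀ x, c x ≠ 0 → ∃ i < n, e i = x) {i : ℕ}
    (hi : i < n) : R.prg c (e i) = ∑ j ∈ Finset.range n, (c (e j) : ℤ) * M j i := by
  rw [h.prg_eq_sum hc]
  exact Finset.sum_congr rfl fun j hj => by rw [h.cm_eq j (Finset.mem_range.1 hj) i hi]

lemma adm (h : R.Emb M n e) {cc : ℕ → ℕ} (hpos : ∀ i < n, cc i ≠ 0) {f : ℕ} (hf : f < n)
    (hsum : ∀ i < n, ∑ j ∈ Finset.range n, (cc j : ℤ) * M j i = if i = f then 1 else 0)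
    (hshort : ∀ i, cc f * R.nm (e f) ≤ 2 * R.nm i) : R.Adm (push e n cc) (e f) where
  pos := by
    rw [h.push_apply cc hf]
    exact hpos f hf
  pair := by
    intro x hx
    obtain ⟨i, hi, rfl⟩ := exists_of_push_ne hx
    rw [h.prg_eq (fun x hx => exists_of_push_ne hx) hi]
    have : (e i = e f) ↔ i = f := ⟨h.inj i hi f hf, fun h => by rw [h]⟩
    simp only [this]
    rw [← hsum i hi]
    exact Finset.sum_congr rfl fun j hj => by rw [h.push_apply cc (Finset.mem_range.1 hj)]
  short := by
    intro i
    rw [h.push_apply cc hf]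
    exact hshort i

/-- Extending an embedding by one more node. -/
lemma extend (h : R.Emb M n e) {j : Fin ℓ} (hj : ∀ i < n, e i ≠ j)
    (h1 : ∀ i < n, R.cm (e i) j = M i n) (h2 : ∀ i < n, R.cm j (e i) = M n i) (h3 : M n n = 2) :
    R.Emb M (n + 1) (Function.update e n j) := by
  have hu : ∀ i < n, Function.update e n j i = e i := fun i hi =>
    Function.update_of_ne (by omega) _ _
  constructor
  · intro i hi k hk
    rcases Nat.lt_succ_iff_lt_or_eq.1 hi with hi | rfl <;>
    rcases Nat.lt_succ_iff_lt_or_eq.1 hk with hk | rfl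
    · rw [hu i hi, hu k hk, h.cm_eq i hi k hk]
    · rw [hu i hi, Function.update_self, h1 i hi]
    · rw [hu k hk, Function.update_self, h2 k hk]
    · rw [Function.update_self, cm_self, h3]
  · intro i hi k hk
    rcases Nat.lt_succ_iff_lt_or_eq.1 hi with hi | rfl <;>
    rcases Nat.lt_succ_iff_lt_or_eq.1 hk with hk | rfl
    · rw [hu i hi, hu k hk]
      exact h.inj i hi k hk
    · rw [hu i hi, Function.update_self]
      exact fun h' => absurd h' (hj i hi)
    · rw [hu k hk, Function.update_self]
      exact fun h' => absurd h'.symm (hj k hk)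
    · exact fun _ => rfl

end Emb

lemma sum_telescope (G a : ℕ → ℤ) (h0 : a 0 = 2 * G 0 - G 1)
    (ha : ∀ i, a (i + 1) = 2 * G (i + 1) - G i - G (i + 2)) (m : ℕ) :
    ∑ i ∈ Finset.range (m + 1), a i = G 0 + G m - G (m + 1) := by
  induction m with
  | zero => rw [zero_add, Finset.sum_range_one, h0]; ring
  | succ k ih => rw [Finset.sum_range_succ, ih, ha]; ring

lemma Adm.not_isTypeASub {c : Fin ℓ → ℕ} {f : Fin ℓ} (h : R.Adm c f) :
    ¬ R.IsTypeASub (supp c) := by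
  rintro ⟨e, he⟩
  obtain ⟨m, hm⟩ : ∃ m, (supp c).card = m + 1 :=
    Nat.exists_eq_succ_of_ne_zero (Finset.card_ne_zero_of_mem (mem_supp.2 h.pos))
  generalize (supp c).card = n at e he hm
  subst hm
  let e' : ℕ → Fin ℓ := fun k => if hk : k < m + 1 then (e ⟨k, hk⟩).1 else f
  have he' : ∀ k (hk : k < m + 1), e' k = (e ⟨k, hk⟩).1 := fun k hk => dif_pos hk
  have hE : R.Emb (mat 1 1 1) (m + 1) e' := by
    refine Emb.of_cm (fun i hi j hj => ?_) fun i _ j _ => mat_eq_two one_pos one_pos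
    have h1 := he ⟨j, hj⟩ ⟨i, hi⟩
    rw [cpair_simple, ← he' i hi, ← he' j hj] at h1
    unfold mat
    simp only [Fin.mk.injEq] at h1
    split_ifs at h1 ⊢ <;> first | omega | exact_mod_cast h1
  have honto : ∀ x, c x ≠ 0 → ∃ i < m + 1, e' i = x := by
    intro x hx
    refine ⟨e.symm ⟨x, mem_supp.2 hx⟩, Fin.is_lt _, ?_⟩
    rw [he' _ (Fin.is_lt _)]
    simp
  let G : ℕ → ℤ := fun j => if j < m + 1 then (c (e' j) : ℤ) else 0
  have hG : ∀ j, m + 1 ≤ j → G j = 0 := fun j hj => if_neg (by omega)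
  let a : ℕ → ℤ := fun i => ∑ j ∈ Finset.range (m + 1), G j * mat 1 1 1 j i
  have ha : ∀ i < m + 1, R.prg c (e' i) = a i := by
    intro i hi
    rw [hE.prg_eq honto hi]
    refine Finset.sum_congr rfl fun j hj => ?_
    simp only [G, if_pos (Finset.mem_range.1 hj)]
  have h1 := sum_telescope G a (by simp only [a]; rw [sum_mat one_ne_zero _ _ hG]; simp)
    (fun i => by
      simp only [a]; rw [sum_mat one_ne_zero _ _ hG]
      rcases i with _ | i <;> simp) m
  have h2 : ∑ i ∈ Finset.range (m + 1), a i = 1 := by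
    have h3 : ∑ i ∈ Finset.range (m + 1), a i =
        ∑ i ∈ Finset.range (m + 1), if e' i = f then 1 else 0 := by
      refine Finset.sum_congr rfl fun i hi => ?_
      rw [← ha i (Finset.mem_range.1 hi), h.pair]
      rw [he' i (Finset.mem_range.1 hi)]
      exact mem_supp.1 (e _).2
    rw [h3, ← hE.sum_eq (fun x => if x = f then 1 else 0)]
    · simp
    · intro x hx
      refine honto x ?_
      have : x = f := by
        by_contra hne
        simp [hne] at hx
      rw [this]
      exact h.pos
  have hcpos : ∀ i < m + 1, 1 ≤ G i := by
    intro i hi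
    simp only [G, if_pos hi]
    have : c (e' i) ≠ 0 := by
      rw [he' i hi]
      exact mem_supp.1 (e _).2
    omega
  rw [h2, hG (m + 1) le_rfl] at h1
  have := hcpos 0 (by omega)
  have := hcpos m (by omega)
  omega

lemma Adm.exists_dominant {c : Fin ℓ → ℕ} {f : Fin ℓ} (h : R.Adm c f) {ω : Fin ℓ → E}
    (hω : ∀ i j, cpair (ω i) (R.simple j) = if i = j then 1 else 0) {w : E}
    (hw : ∀ i, 0 < ⟪w, R.simple i⟫) :
    ∃ η, R.IsDominant η ∧ (∀ i ∈ supp c, cpair η (R.simple i) = 0) ∧ R.vec c = ω f - η := by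
  have hp : ∀ i, cpair (ω f - R.vec c) (R.simple i) =
      ((if f = i then 1 else 0) - R.prg c i : ℤ) := by
    intro i
    have : cpair (ω f - R.vec c) (R.simple i) =
        cpair (ω f) (R.simple i) - cpair (R.vec c) (R.simple i) := by
      simp only [cpair, inner_sub_left]
      ring
    rw [this, hω, cpair_vec]
    push_cast
    rfl
  have hz : ∀ i ∈ supp c, cpair (ω f - R.vec c) (R.simple i) = 0 := by
    intro i hi
    rw [hp, h.pair i (mem_supp.1 hi)]
    simp [eq_comm]
  refine ⟨ω f - R.vec c, ⟨isIntegral_of_simple hw fun i => ⟨_, hp i⟩, fun i => ?_⟩, hz, by abel⟩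
  by_cases hi : c i = 0
  · have hif : f ≠ i := fun h' => h.pos (h' ▸ hi)
    rw [hp, if_neg hif]
    have : R.prg c i ≤ 0 := by
      refine Finset.sum_nonpos fun j _ => ?_
      by_cases hj : j = i
      · simp [hj, hi]
      · exact mul_nonpos_of_nonneg_of_nonpos (Int.natCast_nonneg _) (R.cm_nonpos hj)
    have h2 : (0 : ℤ) ≤ 0 - R.prg c i := by omega
    exact_mod_cast h2
  · exact (hz i (mem_supp.2 hi)).ge

lemma exists_attach (hG2 : ∀ i j : Fin ℓ, cpair (R.simple i) (R.simple j) ≠ -3)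
    {c : Fin ℓ → ℕ} (hc : c ≠ 0) (hn : ∀ j, ⟪R.vec c, R.vec c⟫ ≤ R.nm j) (hfull : ∃ j, c j = 0) :
    ∃ i j, c j = 0 ∧ c i = 1 ∧ R.cm i j = -1 ∧ (R.cm j i = -1 ∨ R.cm j i = -2) ∧
      ∀ k, c k ≠ 0 → k ≠ i → R.cm k j = 0 ∧ R.cm j k = 0 := by
  obtain ⟨i, j, hi, hj, hij⟩ : ∃ i j, c i ≠ 0 ∧ c j = 0 ∧ R.cm i j ≠ 0 := by
    by_contra! hno
    obtain ⟨i, hi⟩ := Function.ne_iff.1 hc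
    have := R.irred (supp c) ⟨i, mem_supp.2 hi⟩ fun i hi j hj => by
      rw [← R.cm_eq_zero_iff_inner]
      refine hno i j (mem_supp.1 hi) ?_
      by_contra h
      exact hj (mem_supp.2 h)
    obtain ⟨j, hj⟩ := hfull
    exact mem_supp.1 (this ▸ Finset.mem_univ j) hj
  have hne : ∀ k, c k ≠ 0 → k ≠ j := fun k hk h => hk (h ▸ hj)
  have hterm : ∀ k, (c k : ℤ) * R.cm k j ≤ 0 := by
    intro k
    by_cases hk : c k = 0
    · simp [hk]
    · exact mul_nonpos_of_nonneg_of_nonpos (Int.natCast_nonneg _) (R.cm_nonpos (hne k hk))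
  have h1 := R.neg_one_le_prg hj (hn j)
  have h2 := R.cm_nonpos (hne i hi)
  have h3 : R.cm i j ≤ -1 := by omega
  have h4 : (1 : ℤ) ≤ c i := by omega
  have h6 : ∀ k, k ≠ i → (c k : ℤ) * R.cm k j = 0 ∧ (c i : ℤ) * R.cm i j = -1 := by
    intro k hki
    have h7 : R.prg c j ≤ (c i : ℤ) * R.cm i j + (c k : ℤ) * R.cm k j := by
      rw [prg, ← Finset.add_sum_erase _ _ (Finset.mem_univ i),
        ← Finset.add_sum_erase _ _ (Finset.mem_erase.2 ⟨hki, Finset.mem_univ k⟩)]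
      have := Finset.sum_nonpos (s := (Finset.univ.erase i).erase k) fun l _ => hterm l
      linarith
    have h8 : (c i : ℤ) * R.cm i j ≤ -1 := by nlinarith
    have h9 := hterm k
    constructor <;> omega
  obtain ⟨-, h7⟩ := h6 j (hne i hi).symm
  have h8 : R.cm i j = -1 := by nlinarith
  have h9 : c i = 1 := by
    rw [h8] at h7
    omega
  refine ⟨i, j, hj, h9, h8, ?_, fun k hk hki => ?_⟩
  · rcases R.cm_cases hG2 (hne i hi) with h | h | h | h <;> omega
  · have := (mul_eq_zero.1 (h6 k hki).1).resolve_left (by exact_mod_cast hk)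
    exact ⟨this, (R.cm_eq_zero_comm k j).1 this⟩

/-- The Cartan matrix `M` on the indices below `n` with an extra node `n` attached to the
node `i`, the entry at `(n, i)` being `-q`. -/
def att (M : ℕ → ℕ → ℤ) (n i : ℕ) (q : ℤ) (j k : ℕ) : ℤ :=
  if j = n then (if k = n then 2 else if k = i then -q else 0)
  else if k = n then (if j = i then -1 else 0) else M j k

lemma Emb.nm_eq {M : ℕ → ℕ → ℤ} {n : ℕ} {e : ℕ → Fin ℓ} (h : R.Emb M n e) {i j : ℕ}
    (hi : i < n) (hj : j < n) : M i j * R.nm (e j) = M j i * R.nm (e i) := by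
  rw [← h.cm_eq i hi j hj, ← h.cm_eq j hj i hi]
  exact R.cm_mul_nm_comm _ _

lemma Emb.exists_att (hG2 : ∀ i j : Fin ℓ, cpair (R.simple i) (R.simple j) ≠ -3)
    {M : ℕ → ℕ → ℤ} {n : ℕ} {e : ℕ → Fin ℓ} (h : R.Emb M n e) {cc : ℕ → ℕ}
    (hpos : ∀ i < n, cc i ≠ 0) (hc : push e n cc ≠ 0)
    (hn : ∀ j, ⟪R.vec (push e n cc), R.vec (push e n cc)⟫ ≤ R.nm j)
    (hfull : ∃ x, ∀ i < n, e i ≠ x) :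
    ∃ e' : ℕ → Fin ℓ, ∃ i q, i < n ∧ cc i = 1 ∧ (q = 1 ∨ q = 2) ∧ (∀ k < n, e' k = e k) ∧
      R.Emb (att M n i q) (n + 1) e' ∧ R.nm (e' n) = q * R.nm (e' i) := by
  obtain ⟨x, hx⟩ := hfull
  obtain ⟨y, j, hj, hy, hyj, hjy, hoth⟩ := exists_attach hG2 hc hn ⟨x, Emb.push_eq_zero hx⟩
  obtain ⟨i, hi, rfl⟩ := Emb.exists_of_push_ne (e := e) (n := n) (cc := cc) (x := y) (by omega)
  rw [h.push_apply cc hi] at hy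
  have hnj : ∀ k < n, e k ≠ j := by
    rintro k hk rfl
    rw [h.push_apply cc hk] at hj
    exact hpos k hk hj
  have hoth' : ∀ k < n, k ≠ i → R.cm (e k) j = 0 ∧ R.cm j (e k) = 0 := by
    intro k hk hki
    refine hoth _ ?_ fun h' => hki (h.inj k hk i hi h')
    rw [h.push_apply cc hk]
    exact hpos k hk
  have hu : ∀ k < n, Function.update e n j k = e k := fun k hk =>
    Function.update_of_ne (by omega) _ _
  have hE : R.Emb (att M n i (-R.cm j (e i))) (n + 1) (Function.update e n j) := by
    refine Emb.extend (M := att M n i (-R.cm j (e i))) ⟨fun k hk l hl => ?_, h.inj⟩ hnj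
      (fun k hk => ?_) (fun k hk => ?_) (by simp [att])
    · rw [h.cm_eq k hk l hl, att, if_neg (by omega), if_neg (by omega)]
    · rw [att, if_neg (by omega), if_pos rfl]
      split_ifs with hki
      · rw [hki, hyj]
      · exact (hoth' k hk hki).1
    · rw [att, if_pos rfl, if_neg (by omega)]
      split_ifs with hki
      · rw [hki, neg_neg]
      · exact (hoth' k hk hki).2
  refine ⟨Function.update e n j, i, -R.cm j (e i), hi, hy, by omega, hu, hE, ?_⟩
  have h1 := R.cm_mul_nm_comm (e i) j
  rw [hu i hi, Function.update_self]
  rw [hyj] at h1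
  push_cast at h1 ⊢
  linarith

lemma Emb.comp {M M' : ℕ → ℕ → ℤ} {n m : ℕ} {e : ℕ → Fin ℓ} (h : R.Emb M n e) (σ : ℕ → ℕ)
    (hσ : ∀ i < m, σ i < n) (hM : ∀ i < m, ∀ j < m, M (σ i) (σ j) = M' i j)
    (hM' : ∀ i < m, ∀ j < m, M' i j = 2 → i = j) : R.Emb M' m (e ∘ σ) :=
  Emb.of_cm (fun i hi j hj => by
    rw [Function.comp, Function.comp, h.cm_eq _ (hσ i hi) _ (hσ j hj), hM i hi j hj]) hM'

lemma Adm.neg_one_le_prg_add {c c' : Fin ℓ → ℕ} {f' j : Fin ℓ} (h' : R.Adm c' f')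
    (hcc : ∀ i, c i ≠ 0 → c' i ≠ 0) (hf' : c f' = 0) (hj : c' j = 0)
    (hnj : ⟪R.vec c, R.vec c⟫ + ⟪R.vec c', R.vec c'⟫ ≤ R.nm j) :
    -1 ≤ R.prg c j + R.prg c' j := by
  have hcj : c j = 0 := by
    by_contra hne
    exact hcc j hne hj
  rw [← R.prg_add]
  refine R.neg_one_le_prg (by simp [hcj, hj]) ?_
  rw [vec_add, real_inner_add_add_self]
  have h3 : ⟪R.vec c, R.vec c'⟫ = 0 := by
    rw [real_inner_comm, inner_vec_right]
    refine Finset.sum_eq_zero fun i _ => ?_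
    by_cases hi : c i = 0
    · simp [hi]
    · rw [h'.inner_of_ne (hcc i hi), mul_zero]
      rintro rfl
      exact hi hf'
  linarith

variable (R) in
/-- No admissible vector below `b` has positive coefficient, nor full support. -/
structure Bad (b : Fin ℓ → ℕ) : Prop where
  pos : ∀ i, b i ≠ 0
  prg_le : ∀ c f, R.Adm c f → (∀ i, c i ≤ b i) → R.prg b f ≤ 0
  not_full : ∀ c f, R.Adm c f → (∀ i, c i ≤ b i) → ∃ i, c i = 0
  not_three : ∀ i j : Fin ℓ, cpair (R.simple i) (R.simple j) ≠ -3

lemma push_le {e : ℕ → Fin ℓ} {n : ℕ} {cc : ℕ → ℕ} {M : ℕ → ℕ → ℤ} (hE : R.Emb M n e)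
    {b : Fin ℓ → ℕ} (hle : ∀ i < n, cc i ≤ b (e i)) (x : Fin ℓ) : push e n cc x ≤ b x := by
  by_cases hx : push e n cc x = 0
  · omega
  · obtain ⟨i, hi, rfl⟩ := Emb.exists_of_push_ne hx
    rw [hE.push_apply cc hi]
    exact hle i hi

lemma Bad.of_emb {b : Fin ℓ → ℕ} (hb : R.Bad b) {M : ℕ → ℕ → ℤ} {n : ℕ} {e : ℕ → Fin ℓ}
    (h : R.Emb M n e) {cc : ℕ → ℕ} (hpos : ∀ i < n, cc i ≠ 0) {f : ℕ} (hf : f < n)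
    (hsum : ∀ i < n, ∑ j ∈ Finset.range n, (cc j : ℤ) * M j i = if i = f then 1 else 0)
    (hshort : ∀ i, cc f * R.nm (e f) ≤ 2 * R.nm i) (hle : ∀ i < n, cc i ≤ b (e i)) :
    R.prg b (e f) ≤ 0 ∧ ∃ x, ∀ i < n, e i ≠ x := by
  have ha := h.adm hpos hf hsum hshort
  refine ⟨hb.prg_le _ _ ha (push_le h hle), ?_⟩
  obtain ⟨x, hx⟩ := hb.not_full _ _ ha (push_le h hle)
  refine ⟨x, fun i hi hix => hpos i hi ?_⟩
  rw [← h.push_apply cc hi, hix, hx]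

lemma Bad.exists_att {b : Fin ℓ → ℕ} (hb : R.Bad b) {M : ℕ → ℕ → ℤ} {n : ℕ} {e : ℕ → Fin ℓ}
    (h : R.Emb M n e) {cc : ℕ → ℕ} (hpos : ∀ i < n, cc i ≠ 0) {f : ℕ} (hf : f < n)
    (hsum : ∀ i < n, ∑ j ∈ Finset.range n, (cc j : ℤ) * M j i = if i = f then 1 else 0)
    (hshort : ∀ i, cc f * R.nm (e f) ≤ 2 * R.nm i) (hfull : ∃ x, ∀ i < n, e i ≠ x) :
    ∃ e' : ℕ → Fin ℓ, ∃ i q, i < n ∧ cc i = 1 ∧ (q = 1 ∨ q = 2) ∧ (∀ k < n, e' k = e k) ∧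
      R.Emb (att M n i q) (n + 1) e' ∧ R.nm (e' n) = q * R.nm (e' i) := by
  have ha := h.adm hpos hf hsum hshort
  exact h.exists_att hb.not_three hpos ha.ne_zero ha.norm_le hfull

lemma exists_att_one (hnm : ∀ i j, R.nm i = R.nm j) {M : ℕ → ℕ → ℤ} {n : ℕ} {cc : ℕ → ℕ}
    (h : ∃ e' : ℕ → Fin ℓ, ∃ i q, i < n ∧ cc i = 1 ∧ (q = 1 ∨ q = 2) ∧
      R.Emb (att M n i q) (n + 1) e' ∧ R.nm (e' n) = q * R.nm (e' i)) :
    ∃ e' : ℕ → Fin ℓ, ∃ i < n, cc i = 1 ∧ R.Emb (att M n i 1) (n + 1) e' := by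
  obtain ⟨e', i, q, hi, hcc, hq, hE, hn⟩ := h
  have : q = 1 := by
    rw [hnm (e' n) (e' i)] at hn
    have h1 := R.nm_pos (e' i)
    rcases hq with rfl | rfl
    · rfl
    · push_cast at hn
      linarith
  subst this
  exact ⟨e', i, hi, hcc, hE⟩

/-- The coefficients of the highest root of type `D`. -/
def coeffD (n j : ℕ) : ℕ := if n ≤ j then 0 else if j < 2 ∨ j + 1 = n then 1 else 2

lemma coeffD_ne_zero {n i : ℕ} (hi : i < n) : coeffD n i ≠ 0 := by
  unfold coeffD
  split_ifs <;> omega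

lemma sum_coeffD {n : ℕ} (hn : 4 ≤ n) {i : ℕ} (hi : i < n) :
    ∑ j ∈ Finset.range n, (coeffD n j : ℤ) * mat 2 1 1 j i = if i = n - 2 then 1 else 0 := by
  rw [sum_mat (G := fun j => (coeffD n j : ℤ)) two_ne_zero 1 1
    (fun j hj => by simp [coeffD, hj])]
  rcases i with _ | _ | _ | i
  · simp only [coeffD]; grind
  · simp only [coeffD]; grind
  · simp only [coeffD]; grind
  · simp only [coeffD]; grind

lemma coeffD_short (hnm : ∀ i j, R.nm i = R.nm j) (n : ℕ) (i j : Fin ℓ) :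
    coeffD n (n - 2) * R.nm j ≤ 2 * R.nm i := by
  have : coeffD n (n - 2) ≤ 2 := by
    unfold coeffD
    split_ifs <;> omega
  have h2 : (coeffD n (n - 2) : ℝ) ≤ 2 := by exact_mod_cast this
  rw [hnm i j]
  exact mul_le_mul_of_nonneg_right h2 (R.nm_pos j).le

lemma sum_telescope_Ico (B : ℕ → ℤ) (s m : ℕ) :
    ∑ i ∈ Finset.range m, (2 * B (s + 1 + i) - B (s + i) - B (s + 2 + i)) =
      B (s + 1) - B s + B (s + m) - B (s + m + 1) := by
  induction m with
  | zero => simp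
  | succ k ih =>
    rw [Finset.sum_range_succ, ih]
    ring_nf

/-- A numerical obstruction in type `D`. -/
lemma false_of_coeffD {n : ℕ} {B : ℕ → ℤ} (hB : ∀ i < n, 1 ≤ B i) (hB0 : ∀ i, n ≤ i → B i = 0)
    (hsum : ∑ i ∈ Finset.range n, max (∑ j ∈ Finset.range n, B j * mat 2 1 1 j i) 0 ≤ 2)
    (hn : 4 ≤ n)
    (hD : ∀ k, 4 ≤ k → k ≤ n → (∀ i < k, (coeffD k i : ℤ) ≤ B i) →
      ∑ j ∈ Finset.range n, B j * mat 2 1 1 j (k - 2) ≤ 0 ∧ k ≠ n) : False := by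
  simp only [sum_mat two_ne_zero 1 1 hB0, one_mul] at hsum hD
  have hD' : ∀ k, 4 ≤ k → k ≤ n → (∀ i, 2 ≤ i → i + 2 ≤ k → 2 ≤ B i) →
      (2 * B (k - 2) - (if k = 4 then B 0 + B 1 else B (k - 3)) - B (k - 1) ≤ 0) ∧ k ≠ n := by
    intro k hk hkn h
    have h1 := hD k hk hkn fun i hi => by
      have h2 := hB i (by omega)
      have h3 := h i
      unfold coeffD
      split_ifs <;> push_cast <;> omega
    refine ⟨?_, h1.2⟩
    have h2 := h1.1
    obtain ⟨l, rfl⟩ : ∃ l, k = l + 4 := ⟨k - 4, by omega⟩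
    rcases l with _ | l
    · simp at h2 ⊢
      linarith
    · simp at h2 ⊢
      linarith
  obtain ⟨p, hp2, hpn, hp1, hmin⟩ : ∃ p, 2 ≤ p ∧ p + 2 ≤ n ∧ B p = 1 ∧
      ∀ i, 2 ≤ i → i < p → 2 ≤ B i := by
    have hex : ∃ p, 2 ≤ p ∧ p + 2 ≤ n ∧ B p < 2 := by
      by_contra! hno
      exact (hD' n hn le_rfl hno).2 rfl
    classical
    obtain ⟨h1, h2, h3⟩ := Nat.find_spec hex
    refine ⟨Nat.find hex, h1, h2, ?_, fun i hi hip => ?_⟩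
    · have := hB _ (show Nat.find hex < n by omega)
      omega
    · have := Nat.find_min hex hip
      push Not at this
      exact this hi (by omega)
  have hconv : ∀ d, d + 3 ≤ p → B (d + 2) - B (d + 3) ≤ B 2 - B 3 := by
    intro d
    induction d with
    | zero => intro _; simp
    | succ d ih =>
      intro hd
      have h1 := (hD' (d + 5) (by omega) (by omega) fun i hi hi' => hmin i hi (by omega)).1
      simp at h1
      have h2 := ih (by omega)
      simp only [show d + 1 + 2 = d + 3 by omega, show d + 1 + 3 = d + 4 by omega]
      linarith
  have h01 : 1 ≤ B 0 + B 1 - B 2 := by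
    by_cases hp : p = 2
    · subst hp
      have := hB 0 (by omega)
      have := hB 1 (by omega)
      omega
    · have h1 := hconv (p - 3) (by omega)
      rw [show p - 3 + 2 = p - 1 by omega, show p - 3 + 3 = p by omega] at h1
      have h2 := hmin (p - 1) (by omega) (by omega)
      have h3 := (hD' 4 le_rfl hn fun i hi hi' => hmin i hi (by omega)).1
      simp at h3
      omega
  obtain ⟨m, rfl⟩ : ∃ m, n = p + 1 + (m + 1) := ⟨n - p - 2, by omega⟩
  rw [Finset.sum_range_add] at hsum
  have h3 := sum_telescope_Ico B p (m + 1)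
  have h4 : ∑ i ∈ Finset.range (m + 1), (2 * B (p + 1 + i) - B (p + i) - B (p + 2 + i)) ≤
      ∑ x ∈ Finset.range (m + 1), max (if p + 1 + x = 0 then 2 * B 0 - B 2 else
        2 * B (p + 1 + x) - (if p + 1 + x = 2 then B 0 else 0) -
          (if p + 1 + x = 1 then 0 else B (p + 1 + x - 1)) - B (p + 1 + x + 1)) 0 := by
    refine Finset.sum_le_sum fun x _ => le_max_of_le_left ?_
    rw [if_neg (by omega), if_neg (by omega), if_neg (by omega),
      show p + 1 + x - 1 = p + x by omega, show p + 1 + x + 1 = p + 2 + x by omega]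
    linarith
  have h5 := Finset.sum_le_sum_of_subset_of_nonneg
    (Finset.range_subset_range.2 (show 2 ≤ p + 1 by omega))
    (f := fun x => max (if x = 0 then 2 * B 0 - B 2 else
        2 * B x - (if x = 2 then B 0 else 0) -
          (if x = 1 then 0 else B (x - 1)) - B (x + 1)) 0) fun i _ _ => le_max_right _ _
  rw [Finset.sum_range_succ, Finset.sum_range_one] at h5
  have h6 := hB (p + 1) (by omega)
  have h7 := hB (p + (m + 1)) (by omega)
  have h8 := hB0 (p + (m + 1) + 1) (by omega)
  simp at h5
  simp only [hp1] at h3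
  have h9 := le_max_left (2 * B 0 - B 2) 0
  have h10 := le_max_left (2 * B 1 - B 2) 0
  linarith

lemma Emb.prg_onto {M : ℕ → ℕ → ℤ} {n : ℕ} {e : ℕ → Fin ℓ} (h : R.Emb M n e)
    (honto : ¬ ∃ x, ∀ i < n, e i ≠ x) (b : Fin ℓ → ℕ) {i : ℕ} (hi : i < n) :
    R.prg b (e i) = ∑ j ∈ Finset.range n, (if j < n then (b (e j) : ℤ) else 0) * M j i := by
  push Not at honto
  rw [h.prg_eq (fun x _ => honto x) hi]
  exact Finset.sum_congr rfl fun j hj => by rw [if_pos (Finset.mem_range.1 hj)]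

lemma Emb.sum_onto {M : ℕ → ℕ → ℤ} {n : ℕ} {e : ℕ → Fin ℓ} (h : R.Emb M n e)
    (honto : ¬ ∃ x, ∀ i < n, e i ≠ x) {b : Fin ℓ → ℕ} (hsum : ∑ x, max (R.prg b x) 0 ≤ 2) :
    ∑ i ∈ Finset.range n,
      max (∑ j ∈ Finset.range n, (if j < n then (b (e j) : ℤ) else 0) * M j i) 0 ≤ 2 := by
  refine le_trans (le_of_eq ?_) hsum
  rw [h.sum_eq (fun x => max (R.prg b x) 0)]
  · exact Finset.sum_congr rfl fun i hi => by
      rw [h.prg_onto honto b (Finset.mem_range.1 hi)]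
  · push Not at honto
    exact fun x _ => honto x

lemma short_of_le_two (hnm : ∀ i j, R.nm i = R.nm j) {k : ℕ} (hk : k ≤ 2) (i j : Fin ℓ) :
    k * R.nm j ≤ 2 * R.nm i := by
  rw [hnm i j]
  exact mul_le_mul_of_nonneg_right (by exact_mod_cast hk) (R.nm_pos j).le

lemma Bad.D_le {b : Fin ℓ → ℕ} (hb : R.Bad b) (hnm : ∀ i j, R.nm i = R.nm j)
    {k : ℕ} (hk : 4 ≤ k) {e : ℕ → Fin ℓ} (h : R.Emb (mat 2 1 1) k e)
    (hle : ∀ i < k, coeffD k i ≤ b (e i)) : R.prg b (e (k - 2)) ≤ 0 ∧ ∃ x, ∀ i < k, e i ≠ x :=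
  hb.of_emb h (fun _ hi => coeffD_ne_zero hi) (by omega) (fun _ hi => sum_coeffD hk hi)
    (fun i => coeffD_short hnm k i _) hle

lemma Bad.D_onto {b : Fin ℓ → ℕ} (hb : R.Bad b) (hnm : ∀ i j, R.nm i = R.nm j)
    {n : ℕ} (hn : 4 ≤ n) {e : ℕ → Fin ℓ} (h : R.Emb (mat 2 1 1) n e)
    (hsum : ∑ x, max (R.prg b x) 0 ≤ 2) : ∃ x, ∀ i < n, e i ≠ x := by
  by_contra honto
  refine false_of_coeffD (n := n) (B := fun j => if j < n then (b (e j) : ℤ) else 0)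
    (fun i hi => ?_) (fun i hi => if_neg (by omega)) (h.sum_onto honto hsum) hn ?_
  · simp only [if_pos hi]
    have := hb.pos (e i)
    omega
  · intro k hk hkn hle
    have h1 := hb.D_le hnm hk (h.mono hkn) fun i hi => by
      have := hle i hi
      simp only [if_pos (show i < n by omega)] at this
      exact_mod_cast this
    rw [h.prg_onto honto b (by omega)] at h1
    refine ⟨h1.1, ?_⟩
    rintro rfl
    exact honto h1.2

lemma mat_inj {r : ℕ} {n : ℕ} : ∀ i < n, ∀ j < n, mat r 1 1 i j = 2 → i = j :=
  fun _ _ _ _ => mat_eq_two one_pos one_pos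

/-- The embedding of type `D` in type `E` obtained by dropping the end of the short tail. -/
lemma Emb.D_of_E {n : ℕ} {e : ℕ → Fin ℓ} (h : R.Emb (mat 3 1 1) (n + 1) e) :
    R.Emb (mat 2 1 1) n (e ∘ fun i => if i = 0 then 0 else i + 1) := by
  refine h.comp _ (fun i hi => ?_) (fun i _ j _ => ?_) mat_inj
  · split_ifs <;> omega
  · rcases i with _ | i <;> rcases j with _ | j <;> simp [mat]

lemma false_of_E6 {B0 B1 B2 B3 B4 B5 m0 m1 m2 m3 m4 m5 : ℤ} (h0 : 1 ≤ B0) (h1 : 1 ≤ B1)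
    (h2 : 1 ≤ B2) (h3 : 1 ≤ B3) (h4 : 1 ≤ B4) (h5 : 1 ≤ B5) (p0 : 0 ≤ m0) (p1 : 0 ≤ m1)
    (p2 : 0 ≤ m2) (p3 : 0 ≤ m3) (p4 : 0 ≤ m4) (a0 : 2 * B0 - B3 ≤ m0)
    (a1 : 2 * B1 - B2 ≤ m1) (a2 : 2 * B2 - B1 - B3 ≤ m2) (a3 : 2 * B3 - B0 - B2 - B4 ≤ m3)
    (a4 : 2 * B4 - B3 - B5 ≤ m4) (a5 : 2 * B5 - B4 ≤ m5) (hs : m0 + m1 + m2 + m3 + m4 + m5 ≤ 2)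
    (d4 : 2 ≤ B3 → 2 * B3 - B0 - B2 - B4 ≤ 0) (d5 : 2 ≤ B3 → 2 ≤ B4 → 2 * B4 - B3 - B5 ≤ 0)
    (d5' : 2 ≤ B2 → 2 ≤ B3 → 2 * B2 - B1 - B3 ≤ 0)
    (e6 : 2 ≤ B0 → 2 ≤ B2 → 3 ≤ B3 → 2 ≤ B4 → False) : False := by
  lia

lemma false_of_E7 {B0 B1 B2 B3 B4 B5 B6 m0 m1 m2 m3 m4 m5 m6 : ℤ} (h0 : 1 ≤ B0) (h1 : 1 ≤ B1)
    (h2 : 1 ≤ B2) (h3 : 1 ≤ B3) (h4 : 1 ≤ B4) (h5 : 1 ≤ B5) (h6 : 1 ≤ B6) (p0 : 0 ≤ m0)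
    (p1 : 0 ≤ m1) (p2 : 0 ≤ m2) (p3 : 0 ≤ m3) (p4 : 0 ≤ m4) (p5 : 0 ≤ m5)
    (a0 : 2 * B0 - B3 ≤ m0) (a1 : 2 * B1 - B2 ≤ m1) (a2 : 2 * B2 - B1 - B3 ≤ m2)
    (a3 : 2 * B3 - B0 - B2 - B4 ≤ m3) (a4 : 2 * B4 - B3 - B5 ≤ m4) (a5 : 2 * B5 - B4 - B6 ≤ m5)
    (a6 : 2 * B6 - B5 ≤ m6) (hs : m0 + m1 + m2 + m3 + m4 + m5 + m6 ≤ 2)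
    (d4 : 2 ≤ B3 → 2 * B3 - B0 - B2 - B4 ≤ 0) (d5 : 2 ≤ B3 → 2 ≤ B4 → 2 * B4 - B3 - B5 ≤ 0)
    (d5' : 2 ≤ B2 → 2 ≤ B3 → 2 * B2 - B1 - B3 ≤ 0)
    (d6 : 2 ≤ B3 → 2 ≤ B4 → 2 ≤ B5 → 2 * B5 - B4 - B6 ≤ 0)
    (e6 : 2 ≤ B0 → 2 ≤ B2 → 3 ≤ B3 → 2 ≤ B4 → 2 * B0 - B3 ≤ 0)
    (e7 : 2 ≤ B0 → 2 ≤ B1 → 3 ≤ B2 → 4 ≤ B3 → 3 ≤ B4 → 2 ≤ B5 → False) : False := by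
  lia

lemma false_of_E8 {B0 B1 B2 B3 B4 B5 B6 B7 m0 m1 m2 m3 m4 m5 m6 m7 : ℤ} (h0 : 1 ≤ B0)
    (h1 : 1 ≤ B1) (h2 : 1 ≤ B2) (h3 : 1 ≤ B3) (h4 : 1 ≤ B4) (h5 : 1 ≤ B5) (h6 : 1 ≤ B6)
    (h7 : 1 ≤ B7) (p0 : 0 ≤ m0) (p1 : 0 ≤ m1) (p2 : 0 ≤ m2) (p3 : 0 ≤ m3) (p4 : 0 ≤ m4)
    (p5 : 0 ≤ m5) (p6 : 0 ≤ m6) (p7 : 0 ≤ m7) (a0 : 2 * B0 - B3 ≤ m0) (a1 : 2 * B1 - B2 ≤ m1)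
    (a2 : 2 * B2 - B1 - B3 ≤ m2) (a4 : 2 * B4 - B3 - B5 ≤ m4)
    (a5 : 2 * B5 - B4 - B6 ≤ m5) (a6 : 2 * B6 - B5 - B7 ≤ m6) (a7 : 2 * B7 - B6 ≤ m7)
    (hs : m0 + m1 + m2 + m3 + m4 + m5 + m6 + m7 ≤ 2) (d4 : 2 ≤ B3 → 2 * B3 - B0 - B2 - B4 ≤ 0)
    (d5 : 2 ≤ B3 → 2 ≤ B4 → 2 * B4 - B3 - B5 ≤ 0) (d5' : 2 ≤ B2 → 2 ≤ B3 → 2 * B2 - B1 - B3 ≤ 0)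
    (d6 : 2 ≤ B3 → 2 ≤ B4 → 2 ≤ B5 → 2 * B5 - B4 - B6 ≤ 0)
    (d7 : 2 ≤ B3 → 2 ≤ B4 → 2 ≤ B5 → 2 ≤ B6 → 2 * B6 - B5 - B7 ≤ 0)
    (e6 : 2 ≤ B0 → 2 ≤ B2 → 3 ≤ B3 → 2 ≤ B4 → 2 * B0 - B3 ≤ 0)
    (e7 : 2 ≤ B0 → 2 ≤ B1 → 3 ≤ B2 → 4 ≤ B3 → 3 ≤ B4 → 2 ≤ B5 → 2 * B1 - B2 ≤ 0)
    (e8 : 3 ≤ B0 → 2 ≤ B1 → 4 ≤ B2 → 6 ≤ B3 → 5 ≤ B4 → 4 ≤ B5 → 3 ≤ B6 → 2 ≤ B7 → False) :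
    False := by
  have k3 : 2 ≤ B3 := by clear d4 d5 d5' d6 d7 e6 e7 e8; lia
  have k4 : 2 ≤ B4 := by clear e6 e7 e8; lia
  have k2 : 2 ≤ B2 := by clear e7 e8; lia
  specialize d4 k3
  specialize d5 k3 k4
  specialize d5' k2 k3
  specialize d6 k3 k4
  specialize d7 k3 k4
  have k5 : 2 ≤ B5 := by clear e7 e8; lia
  specialize d6 k5
  specialize d7 k5
  lia

lemma Bad.E6_le {b : Fin ℓ → ℕ} (hb : R.Bad b) (hnm : ∀ i j, R.nm i = R.nm j) {e : ℕ → Fin ℓ}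
    (h : R.Emb (mat 3 1 1) 6 e) (h0 : 2 ≤ b (e 0)) (h2 : 2 ≤ b (e 2)) (h3 : 3 ≤ b (e 3))
    (h4 : 2 ≤ b (e 4)) : R.prg b (e 0) ≤ 0 ∧ ∃ x, ∀ i < 6, e i ≠ x := by
  refine hb.of_emb h (cc := fun j => [2, 1, 2, 3, 2, 1].getD j 0) (f := 0) (by decide) (by norm_num)
    (by decide) (fun i => short_of_le_two hnm (by decide) _ _) fun i hi => ?_
  have := hb.pos (e i)
  interval_cases i <;> simp <;> omega

lemma Bad.E7_le {b : Fin ℓ → ℕ} (hb : R.Bad b) (hnm : ∀ i j, R.nm i = R.nm j) {e : ℕ → Fin ℓ}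
    (h : R.Emb (mat 3 1 1) 7 e) (h0 : 2 ≤ b (e 0)) (h1 : 2 ≤ b (e 1)) (h2 : 3 ≤ b (e 2))
    (h3 : 4 ≤ b (e 3)) (h4 : 3 ≤ b (e 4)) (h5 : 2 ≤ b (e 5)) :
    R.prg b (e 1) ≤ 0 ∧ ∃ x, ∀ i < 7, e i ≠ x := by
  refine hb.of_emb h (cc := fun j => [2, 2, 3, 4, 3, 2, 1].getD j 0) (f := 1) (by decide)
    (by norm_num) (by decide) (fun i => short_of_le_two hnm (by decide) _ _) fun i hi => ?_
  have := hb.pos (e i)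
  interval_cases i <;> simp <;> omega

lemma Bad.E8_le {b : Fin ℓ → ℕ} (hb : R.Bad b) (hnm : ∀ i j, R.nm i = R.nm j) {e : ℕ → Fin ℓ}
    (h : R.Emb (mat 3 1 1) 8 e) (h0 : 3 ≤ b (e 0)) (h1 : 2 ≤ b (e 1)) (h2 : 4 ≤ b (e 2))
    (h3 : 6 ≤ b (e 3)) (h4 : 5 ≤ b (e 4)) (h5 : 4 ≤ b (e 5)) (h6 : 3 ≤ b (e 6))
    (h7 : 2 ≤ b (e 7)) : ∃ x, ∀ i < 8, e i ≠ x := by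
  refine (hb.of_emb h (cc := fun j => [3, 2, 4, 6, 5, 4, 3, 2].getD j 0) (f := 7) (by decide)
    (by norm_num) (by decide) (fun i => short_of_le_two hnm (by decide) _ _) fun i hi => ?_).2
  interval_cases i <;> simp <;> omega

lemma Bad.D5_le {b : Fin ℓ → ℕ} (hb : R.Bad b) (hnm : ∀ i j, R.nm i = R.nm j) {e : ℕ → Fin ℓ}
    (h : R.Emb (mat 3 1 1) 5 e) (h2 : 2 ≤ b (e 2)) (h3 : 2 ≤ b (e 3)) : R.prg b (e 2) ≤ 0 := by
  refine (hb.of_emb h (cc := fun j => [1, 1, 2, 2, 1].getD j 0) (f := 2) (by decide)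
    (by norm_num) (by decide) (fun i => short_of_le_two hnm (by decide) _ _) fun i hi => ?_).1
  have := hb.pos (e i)
  interval_cases i <;> simp <;> omega

lemma Bad.D_le_of_E {b : Fin ℓ → ℕ} (hb : R.Bad b) (hnm : ∀ i j, R.nm i = R.nm j)
    {k : ℕ} (hk : 4 ≤ k) {e : ℕ → Fin ℓ} (h : R.Emb (mat 3 1 1) (k + 1) e)
    (hle : ∀ i, 3 ≤ i → i < k → 2 ≤ b (e i)) : R.prg b (e (k - 1)) ≤ 0 := by
  have h1 := (hb.D_le hnm hk h.D_of_E fun i hi => by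
    have h1 := hb.pos ((e ∘ fun i => if i = 0 then 0 else i + 1) i)
    unfold coeffD
    split_ifs
    · omega
    · omega
    · have := hle (i + 1) (by omega) (by omega)
      rwa [Function.comp, if_neg (by omega)]).1
  rwa [Function.comp, if_neg (by omega), show k - 2 + 1 = k - 1 by omega] at h1

lemma Emb.prg_E {n : ℕ} {e : ℕ → Fin ℓ} (h : R.Emb (mat 3 1 1) n e)
    (honto : ¬ ∃ x, ∀ i < n, e i ≠ x) (b : Fin ℓ → ℕ) (i : ℕ) (hi : i < n) :
    R.prg b (e i) = if i = 0 then 2 * (b (e 0) : ℤ) - (if 3 < n then (b (e 3) : ℤ) else 0)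
      else 2 * (b (e i) : ℤ) - (if i = 3 then (b (e 0) : ℤ) else 0)
        - (if i = 1 then 0 else (b (e (i - 1)) : ℤ))
        - (if i + 1 < n then (b (e (i + 1)) : ℤ) else 0) := by
  rw [h.prg_onto honto b hi, sum_mat (G := fun j => if j < n then (b (e j) : ℤ) else 0)
    three_ne_zero 1 1 fun j hj => if_neg (by omega)]
  simp only [if_pos hi, if_pos (show 0 < n by omega), if_pos (show i - 1 < n by omega), one_mul]

lemma Emb.sum_max_onto {M : ℕ → ℕ → ℤ} {n : ℕ} {e : ℕ → Fin ℓ} (h : R.Emb M n e)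
    (honto : ¬ ∃ x, ∀ i < n, e i ≠ x) (b : Fin ℓ → ℕ) :
    ∑ x, max (R.prg b x) 0 = ∑ i ∈ Finset.range n, max (R.prg b (e i)) 0 := by
  push Not at honto
  exact h.sum_eq (fun x => max (R.prg b x) 0) fun x _ => honto x

lemma Bad.E6_onto {b : Fin ℓ → ℕ} (hb : R.Bad b) (hnm : ∀ i j, R.nm i = R.nm j)
    {e : ℕ → Fin ℓ} (h : R.Emb (mat 3 1 1) 6 e) (hsum : ∑ x, max (R.prg b x) 0 ≤ 2) :
    ∃ x, ∀ i < 6, e i ≠ x := by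
  by_contra honto
  rw [h.sum_max_onto honto] at hsum
  simp only [Finset.sum_range_succ, Finset.sum_range_zero, zero_add] at hsum
  have hp : ∀ i, 1 ≤ (b (e i) : ℤ) := fun i => by
    have := hb.pos (e i)
    omega
  have hl := fun i => le_max_left (R.prg b (e i)) 0
  have hr := fun i => le_max_right (R.prg b (e i)) 0
  have hd := fun k hk hkn => hb.D_le_of_E hnm (k := k) hk (h.mono (m := k + 1) hkn)
  have A0 := h.prg_E honto b 0 (by norm_num)
  have A1 := h.prg_E honto b 1 (by norm_num)
  have A2 := h.prg_E honto b 2 (by norm_num)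
  have A3 := h.prg_E honto b 3 (by norm_num)
  have A4 := h.prg_E honto b 4 (by norm_num)
  have A5 := h.prg_E honto b 5 (by norm_num)
  simp only [reduceIte, Nat.reduceLT, Nat.reduceAdd, Nat.reduceSub, Nat.reduceEqDiff,
    OfNat.ofNat_ne_zero, one_ne_zero, OfNat.ofNat_ne_one, sub_zero] at A0 A1 A2 A3 A4 A5
  refine false_of_E6 (hp 0) (hp 1) (hp 2) (hp 3) (hp 4) (hp 5) (hr 0) (hr 1) (hr 2) (hr 3) (hr 4)
    (A0 ▸ hl 0) (A1 ▸ hl 1) (A2 ▸ hl 2) (A3 ▸ hl 3) (A4 ▸ hl 4) (A5 ▸ hl 5) hsum ?_ ?_ ?_ ?_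
  · intro k3
    rw [← A3]
    exact hd 4 (by norm_num) (by norm_num) fun i _ _ => by
      interval_cases i; assumption_mod_cast
  · intro k3 k4
    rw [← A4]
    exact hd 5 (by norm_num) (by norm_num) fun i _ _ => by
      interval_cases i <;> assumption_mod_cast
  · intro k2 k3
    rw [← A2]
    exact hb.D5_le hnm (h.mono (by norm_num)) (by exact_mod_cast k2) (by exact_mod_cast k3)
  · intro k0 k2 k3 k4
    norm_cast at k0 k2 k3 k4
    exact honto (hb.E6_le hnm h k0 k2 k3 k4).2

lemma Bad.E7_onto {b : Fin ℓ → ℕ} (hb : R.Bad b) (hnm : ∀ i j, R.nm i = R.nm j)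
    {e : ℕ → Fin ℓ} (h : R.Emb (mat 3 1 1) 7 e) (hsum : ∑ x, max (R.prg b x) 0 ≤ 2) :
    ∃ x, ∀ i < 7, e i ≠ x := by
  by_contra honto
  rw [h.sum_max_onto honto] at hsum
  simp only [Finset.sum_range_succ, Finset.sum_range_zero, zero_add] at hsum
  have hp : ∀ i, 1 ≤ (b (e i) : ℤ) := fun i => by
    have := hb.pos (e i)
    omega
  have hl := fun i => le_max_left (R.prg b (e i)) 0
  have hr := fun i => le_max_right (R.prg b (e i)) 0
  have hd := fun k hk hkn => hb.D_le_of_E hnm (k := k) hk (h.mono (m := k + 1) hkn)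
  have A0 := h.prg_E honto b 0 (by norm_num)
  have A1 := h.prg_E honto b 1 (by norm_num)
  have A2 := h.prg_E honto b 2 (by norm_num)
  have A3 := h.prg_E honto b 3 (by norm_num)
  have A4 := h.prg_E honto b 4 (by norm_num)
  have A5 := h.prg_E honto b 5 (by norm_num)
  have A6 := h.prg_E honto b 6 (by norm_num)
  simp only [reduceIte, Nat.reduceLT, Nat.reduceAdd, Nat.reduceSub, Nat.reduceEqDiff,
    OfNat.ofNat_ne_zero, one_ne_zero, OfNat.ofNat_ne_one, sub_zero] at A0 A1 A2 A3 A4 A5 A6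
  refine false_of_E7 (hp 0) (hp 1) (hp 2) (hp 3) (hp 4) (hp 5) (hp 6) (hr 0) (hr 1) (hr 2) (hr 3)
    (hr 4) (hr 5) (A0 ▸ hl 0) (A1 ▸ hl 1) (A2 ▸ hl 2) (A3 ▸ hl 3) (A4 ▸ hl 4) (A5 ▸ hl 5)
    (A6 ▸ hl 6) hsum ?_ ?_ ?_ ?_ ?_ ?_
  · intro k3
    rw [← A3]
    exact hd 4 (by norm_num) (by norm_num) fun i _ _ => by
      interval_cases i; assumption_mod_cast
  · intro k3 k4
    rw [← A4]
    exact hd 5 (by norm_num) (by norm_num) fun i _ _ => by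
      interval_cases i <;> assumption_mod_cast
  · intro k2 k3
    rw [← A2]
    exact hb.D5_le hnm (h.mono (by norm_num)) (by exact_mod_cast k2) (by exact_mod_cast k3)
  · intro k3 k4 k5
    rw [← A5]
    exact hd 6 (by norm_num) (by norm_num) fun i _ _ => by
      interval_cases i <;> assumption_mod_cast
  · intro k0 k2 k3 k4
    rw [← A0]
    norm_cast at k0 k2 k3 k4
    exact (hb.E6_le hnm (h.mono (by norm_num)) k0 k2 k3 k4).1
  · intro k0 k1 k2 k3 k4 k5
    norm_cast at k0 k1 k2 k3 k4 k5
    exact honto (hb.E7_le hnm h k0 k1 k2 k3 k4 k5).2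

lemma Bad.E8_onto {b : Fin ℓ → ℕ} (hb : R.Bad b) (hnm : ∀ i j, R.nm i = R.nm j)
    {e : ℕ → Fin ℓ} (h : R.Emb (mat 3 1 1) 8 e) (hsum : ∑ x, max (R.prg b x) 0 ≤ 2) :
    ∃ x, ∀ i < 8, e i ≠ x := by
  by_contra honto
  rw [h.sum_max_onto honto] at hsum
  simp only [Finset.sum_range_succ, Finset.sum_range_zero, zero_add] at hsum
  have hp : ∀ i, 1 ≤ (b (e i) : ℤ) := fun i => by
    have := hb.pos (e i)
    omega
  have hl := fun i => le_max_left (R.prg b (e i)) 0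
  have hr := fun i => le_max_right (R.prg b (e i)) 0
  have hd := fun k hk hkn => hb.D_le_of_E hnm (k := k) hk (h.mono (m := k + 1) hkn)
  have A0 := h.prg_E honto b 0 (by norm_num)
  have A1 := h.prg_E honto b 1 (by norm_num)
  have A2 := h.prg_E honto b 2 (by norm_num)
  have A3 := h.prg_E honto b 3 (by norm_num)
  have A4 := h.prg_E honto b 4 (by norm_num)
  have A5 := h.prg_E honto b 5 (by norm_num)
  have A6 := h.prg_E honto b 6 (by norm_num)
  have A7 := h.prg_E honto b 7 (by norm_num)
  simp only [reduceIte, Nat.reduceLT, Nat.reduceAdd, Nat.reduceSub, Nat.reduceEqDiff,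
    OfNat.ofNat_ne_zero, one_ne_zero, OfNat.ofNat_ne_one, sub_zero] at A0 A1 A2 A3 A4 A5 A6 A7
  refine false_of_E8 (hp 0) (hp 1) (hp 2) (hp 3) (hp 4) (hp 5) (hp 6) (hp 7) (hr 0) (hr 1) (hr 2)
    (hr 3) (hr 4) (hr 5) (hr 6) (hr 7) (A0 ▸ hl 0) (A1 ▸ hl 1) (A2 ▸ hl 2) (A4 ▸ hl 4)
    (A5 ▸ hl 5) (A6 ▸ hl 6) (A7 ▸ hl 7) hsum ?_ ?_ ?_ ?_ ?_ ?_ ?_ ?_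
  · intro k3
    rw [← A3]
    exact hd 4 (by norm_num) (by norm_num) fun i _ _ => by
      interval_cases i; assumption_mod_cast
  · intro k3 k4
    rw [← A4]
    exact hd 5 (by norm_num) (by norm_num) fun i _ _ => by
      interval_cases i <;> assumption_mod_cast
  · intro k2 k3
    rw [← A2]
    exact hb.D5_le hnm (h.mono (by norm_num)) (by exact_mod_cast k2) (by exact_mod_cast k3)
  · intro k3 k4 k5
    rw [← A5]
    exact hd 6 (by norm_num) (by norm_num) fun i _ _ => by
      interval_cases i <;> assumption_mod_cast
  · intro k3 k4 k5 k6
    rw [← A6]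
    exact hd 7 (by norm_num) (by norm_num) fun i _ _ => by
      interval_cases i <;> assumption_mod_cast
  · intro k0 k2 k3 k4
    rw [← A0]
    norm_cast at k0 k2 k3 k4
    exact (hb.E6_le hnm (h.mono (by norm_num)) k0 k2 k3 k4).1
  · intro k0 k1 k2 k3 k4 k5
    rw [← A1]
    norm_cast at k0 k1 k2 k3 k4 k5
    exact (hb.E7_le hnm (h.mono (by norm_num)) k0 k1 k2 k3 k4 k5).1
  · intro k0 k1 k2 k3 k4 k5 k6 k7
    norm_cast at k0 k1 k2 k3 k4 k5 k6 k7
    exact honto (hb.E8_le hnm h k0 k1 k2 k3 k4 k5 k6 k7)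

lemma E_step_aux {b : Fin ℓ → ℕ} (hb : R.Bad b) (hnm : ∀ i j, R.nm i = R.nm j) {n : ℕ}
    {e : ℕ → Fin ℓ} (h : R.Emb (mat 3 1 1) n e) {cc : ℕ → ℕ} (hpos : ∀ i < n, cc i ≠ 0) {f : ℕ}
    (hf : f < n)
    (hsum : ∀ i < n, ∑ j ∈ Finset.range n, (cc j : ℤ) * mat 3 1 1 j i = if i = f then 1 else 0)
    (hcf : cc f ≤ 2) (hfull : ∃ x, ∀ i < n, e i ≠ x) :
    ∃ e' : ℕ → Fin ℓ, ∃ i < n, cc i = 1 ∧ R.Emb (att (mat 3 1 1) n i 1) (n + 1) e' := by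
  obtain ⟨e', i, q, hi, hcc, hq, -, hE, hn⟩ := hb.exists_att h hpos hf hsum
    (fun i => short_of_le_two hnm hcf _ _) hfull
  exact exists_att_one hnm ⟨e', i, q, hi, hcc, hq, hE, hn⟩

/-- A type `E` embedding extends to a type `D` embedding of the same size. -/
lemma Bad.E_step {b : Fin ℓ → ℕ} (hb : R.Bad b) (hnm : ∀ i j, R.nm i = R.nm j)
    (hsum : ∑ x, max (R.prg b x) 0 ≤ 2) {n : ℕ} (hn : 6 ≤ n) {e : ℕ → Fin ℓ}
    (h : R.Emb (mat 3 1 1) n e) : ∃ e', R.Emb (mat 2 1 1) n e' := by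
  obtain rfl | rfl | rfl | hn : n = 6 ∨ n = 7 ∨ n = 8 ∨ 9 ≤ n := by omega
  · obtain ⟨e', i, hi, hcc, hE⟩ := E_step_aux hb hnm h (cc := fun j => [2, 1, 2, 3, 2, 1].getD j 0)
      (f := 0) (by decide) (by norm_num) (by decide) (by decide) (hb.E6_onto hnm h hsum)
    obtain rfl | rfl : i = 1 ∨ i = 5 := by interval_cases i <;> simp_all
    · exact ⟨_, hE.comp (fun j => [0, 4, 3, 2, 1, 6].getD j 0) (by decide) (by decide) mat_inj⟩
    · exact ⟨_, hE.comp (fun j => [0, 2, 3, 4, 5, 6].getD j 0) (by decide) (by decide) mat_inj⟩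
  · obtain ⟨e', i, hi, hcc, hE⟩ := E_step_aux hb hnm h
      (cc := fun j => [2, 2, 3, 4, 3, 2, 1].getD j 0)
      (f := 1) (by decide) (by norm_num) (by decide) (by decide) (hb.E7_onto hnm h hsum)
    obtain rfl : i = 6 := by interval_cases i <;> simp_all
    exact ⟨_, hE.comp (fun j => [0, 2, 3, 4, 5, 6, 7].getD j 0) (by decide) (by decide) mat_inj⟩
  · obtain ⟨e', i, hi, hcc, hE⟩ := E_step_aux hb hnm h
      (cc := fun j => [3, 2, 4, 6, 5, 4, 3, 2].getD j 0)
      (f := 7) (by decide) (by norm_num) (by decide) (by decide) (hb.E8_onto hnm h hsum)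
    interval_cases i <;> simp_all
  · have h9 := h.mono hn
    have h8 := h.mono (show 8 ≤ n by omega)
    have ha := h8.adm (cc := fun j => [3, 2, 4, 6, 5, 4, 3, 2].getD j 0) (f := 7) (by decide)
      (by norm_num) (by decide) (fun i => short_of_le_two hnm (by decide) _ _)
    have h0 : push e 8 (fun j => [3, 2, 4, 6, 5, 4, 3, 2].getD j 0) (e 8) = 0 :=
      Emb.push_eq_zero fun i hi hie => by
        have := h9.inj i (by omega) 8 (by norm_num) hie
        omega
    have h1 := R.neg_one_le_prg h0 (ha.norm_le _)
    rw [h9.prg_eq (fun x hx => (Emb.exists_of_push_ne hx).imp fun i hi => ⟨by omega, hi.2⟩)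
      (by norm_num), Finset.sum_range_succ, h0] at h1
    rw [Finset.sum_congr rfl fun j hj => by rw [h8.push_apply _ (Finset.mem_range.1 hj)]] at h1
    simp [Finset.sum_range_succ, mat] at h1

/-- A type `D` embedding extends to a larger one. -/
lemma Bad.D_step {b : Fin ℓ → ℕ} (hb : R.Bad b) (hnm : ∀ i j, R.nm i = R.nm j)
    (hsum : ∑ x, max (R.prg b x) 0 ≤ 2) {n : ℕ} (hn : 4 ≤ n) {e : ℕ → Fin ℓ}
    (h : R.Emb (mat 2 1 1) n e) : ∃ e', R.Emb (mat 2 1 1) (n + 1) e' := by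
  obtain ⟨e', i, q, hi, hcc, hq, -, hE, hnn⟩ := hb.exists_att h (fun _ hi => coeffD_ne_zero hi)
    (show n - 2 < n by omega) (fun _ hi => sum_coeffD hn hi) (fun i => coeffD_short hnm n i _)
    (hb.D_onto hnm hn h hsum)
  obtain ⟨e', i, hi, hcc, hE⟩ := exists_att_one hnm ⟨e', i, q, hi, hcc, hq, hE, hnn⟩
  have hi3 : i = 0 ∨ i = 1 ∨ i + 1 = n := by
    unfold coeffD at hcc
    split_ifs at hcc <;> omega
  obtain rfl | hn5 := eq_or_lt_of_le hn
  · rcases hi3 with rfl | rfl | hi3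
    · exact ⟨_, hE.comp (fun j => [1, 3, 2, 0, 4].getD j 0) (by decide) (by decide) mat_inj⟩
    · exact ⟨_, hE.comp (fun j => [0, 3, 2, 1, 4].getD j 0) (by decide) (by decide) mat_inj⟩
    · obtain rfl : i = 3 := by omega
      exact ⟨_, hE.comp id (by decide) (by decide) mat_inj⟩
  · rcases hi3 with rfl | rfl | hi3
    · refine hb.E_step hnm hsum (by omega) (hE.comp (fun j => if j = 0 then 1 else if j = 1 then n
        else if j = 2 then 0 else j - 1) (fun j hj => ?_) (fun j hj k hk => ?_) mat_inj)
      · split_ifs <;> omega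
      · rcases j with _ | _ | _ | j <;> rcases k with _ | _ | _ | k <;> simp [att, mat] <;> grind
    · refine hb.E_step hnm hsum (by omega) (hE.comp (fun j => if j = 0 then 0 else if j = 1 then n
        else if j = 2 then 1 else j - 1) (fun j hj => ?_) (fun j hj k hk => ?_) mat_inj)
      · split_ifs <;> omega
      · rcases j with _ | _ | _ | j <;> rcases k with _ | _ | _ | k <;> simp [att, mat] <;> grind
    · refine ⟨_, hE.comp id (fun j hj => hj) (fun j hj k hk => ?_) mat_inj⟩
      simp only [att, mat, id]
      grind

lemma Bad.false_of_D {b : Fin ℓ → ℕ} (hb : R.Bad b) (hnm : ∀ i j, R.nm i = R.nm j)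
    (hsum : ∑ x, max (R.prg b x) 0 ≤ 2) {e : ℕ → Fin ℓ} (h : R.Emb (mat 2 1 1) 4 e) : False := by
  have : ∀ k, ∃ e', R.Emb (mat 2 1 1) (k + 4) e' := by
    intro k
    induction k with
    | zero => exact ⟨e, h⟩
    | succ k ih =>
      obtain ⟨e', h'⟩ := ih
      exact hb.D_step hnm hsum (by omega) h'
  obtain ⟨e', h'⟩ := this ℓ
  have := h'.le_card
  omega

lemma sum_mat_A {n i : ℕ} (hi : i < n) :
    ∑ j ∈ Finset.range n, mat 1 1 1 j i =
      (if i = 0 then 1 else 0) + (if i + 1 = n then 1 else 0) := by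
  have h := sum_mat (G := fun j => if j < n then 1 else 0) one_ne_zero 1 1
    (fun j hj => if_neg (not_lt.2 hj)) i
  have h2 : ∑ j ∈ Finset.range n, mat 1 1 1 j i =
      ∑ j ∈ Finset.range n, (if j < n then 1 else 0) * mat 1 1 1 j i :=
    Finset.sum_congr rfl fun j hj => by rw [if_pos (Finset.mem_range.1 hj), one_mul]
  rw [h2, h]
  split_ifs <;> omega

lemma Emb.norm_A (hnm : ∀ i j, R.nm i = R.nm j) {n : ℕ} (hn : 1 ≤ n) {e : ℕ → Fin ℓ}
    (h : R.Emb (mat 1 1 1) n e) (j : Fin ℓ) :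
    ⟪R.vec (push e n fun _ => 1), R.vec (push e n fun _ => 1)⟫ = R.nm j := by
  have h1 : ∑ i, (push e n (fun _ => 1) i : ℤ) * R.prg (push e n fun _ => 1) i = 2 := by
    rw [h.sum_eq]
    · have : ∀ i ∈ Finset.range n, (push e n (fun _ => 1) (e i) : ℤ) *
          R.prg (push e n fun _ => 1) (e i) =
            (if i = 0 then 1 else 0) + (if i = n - 1 then 1 else 0) := by
        intro i hi
        have hi' := Finset.mem_range.1 hi
        rw [h.push_apply _ hi', h.prg_eq (fun x hx => Emb.exists_of_push_ne hx) hi',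
          Finset.sum_congr rfl fun j hj => by rw [h.push_apply _ (Finset.mem_range.1 hj)]]
        simp only [Nat.cast_one, one_mul]
        rw [sum_mat_A hi']
        congr 2
        exact propext (by omega)
      rw [Finset.sum_congr rfl this, Finset.sum_add_distrib, Finset.sum_ite_eq', Finset.sum_ite_eq',
        if_pos (Finset.mem_range.2 (by omega)), if_pos (Finset.mem_range.2 (by omega))]
      norm_num
    · intro x hx
      exact Emb.exists_of_push_ne (cc := fun _ => 1) fun h0 => hx (by simp [h0])
  have h2 : 2 * ⟪R.vec (push e n fun _ => 1), R.vec (push e n fun _ => 1)⟫ = 2 * R.nm j := by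
    have h3 : (∑ i, (push e n (fun _ => 1) i : ℝ) * R.prg (push e n fun _ => 1) i) = 2 := by
      exact_mod_cast h1
    rw [inner_vec_right, Finset.mul_sum]
    conv_rhs => rw [← h3, Finset.sum_mul]
    refine Finset.sum_congr rfl fun i _ => ?_
    have := R.two_inner_vec_simple (push e n fun _ => 1) i
    rw [hnm i j] at this
    linear_combination (push e n (fun _ => 1) i : ℝ) * this
  linarith

lemma Emb.not_onto_A (hA : ¬ R.IsTypeASub Finset.univ) {n : ℕ} {e : ℕ → Fin ℓ}
    (h : R.Emb (mat 1 1 1) n e) : ∃ x, ∀ i < n, e i ≠ x := by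
  by_contra honto
  push Not at honto
  refine hA ?_
  have hbij : Function.Bijective fun a : Fin n =>
      (⟨e a, Finset.mem_univ _⟩ : {i // i ∈ Finset.univ}) :=
    ⟨fun a b hab => Fin.ext (h.inj a a.2 b b.2 (congrArg Subtype.val hab)), fun x => by
      obtain ⟨i, hi, hx⟩ := honto x.1
      exact ⟨⟨i, hi⟩, Subtype.ext hx⟩⟩
  obtain rfl : n = (Finset.univ : Finset (Fin ℓ)).card := by
    have := Fintype.card_of_bijective hbij
    simpa using this
  refine ⟨Equiv.ofBijective _ hbij, fun a b => ?_⟩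
  rw [cpair_simple]
  simp only [Equiv.ofBijective_apply]
  rw [h.cm_eq _ b.2 _ a.2]
  simp only [mat, Fin.ext_iff]
  split_ifs <;> first | omega | simp

/-- A type `A` embedding extends to a larger one. -/
lemma Bad.A_step {b : Fin ℓ → ℕ} (hb : R.Bad b) (hnm : ∀ i j, R.nm i = R.nm j)
    (hsum : ∑ x, max (R.prg b x) 0 ≤ 2) (hA : ¬ R.IsTypeASub Finset.univ) {n : ℕ} (hn : 1 ≤ n)
    {e : ℕ → Fin ℓ} (h : R.Emb (mat 1 1 1) n e) : ∃ e', R.Emb (mat 1 1 1) (n + 1) e' := by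
  have hpush : push e n (fun _ => 1) ≠ 0 := fun h0 => by
    have := h.push_apply (fun _ => 1) (show 0 < n by omega)
    simp [h0] at this
  obtain ⟨e', i, q, hi, hcc, hq, -, hE, hnn⟩ := h.exists_att hb.not_three (fun _ _ => one_ne_zero)
    hpush (fun j => (h.norm_A hnm hn j).le) (h.not_onto_A hA)
  obtain ⟨e', i, hi, -, hE⟩ := exists_att_one (cc := fun _ => 1) hnm
    ⟨e', i, q, hi, hcc, hq, hE, hnn⟩
  by_cases hin : i + 1 = n
  · refine ⟨_, hE.comp id (fun j hj => hj) (fun j hj k hk => ?_) mat_inj⟩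
    simp only [att, mat, id]
    grind
  · by_cases hi0 : i = 0
    · subst hi0
      refine ⟨_, hE.comp (fun j => if j = 0 then n else j - 1) (fun j hj => ?_)
        (fun j hj k hk => ?_) mat_inj⟩
      · split_ifs <;> omega
      · rcases j with _ | _ | j <;> rcases k with _ | _ | k <;> simp [att, mat] <;> grind
    · refine (hb.false_of_D hnm hsum (hE.comp (fun j => if j = 0 then n else i + j - 2)
        (fun j hj => ?_) (fun j hj k hk => ?_) mat_inj)).elim
      · split_ifs <;> omega
      · obtain ⟨i, rfl⟩ : ∃ i', i = i' + 1 := ⟨i - 1, by omega⟩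
        interval_cases j <;> interval_cases k <;> simp [att, mat] <;> grind

lemma Bad.false_of_simplyLaced [Nonempty (Fin ℓ)] {b : Fin ℓ → ℕ} (hb : R.Bad b)
    (hnm : ∀ i j, R.nm i = R.nm j) (hsum : ∑ x, max (R.prg b x) 0 ≤ 2)
    (hA : ¬ R.IsTypeASub Finset.univ) : False := by
  have : ∀ k, ∃ e', R.Emb (mat 1 1 1) (k + 1) e' := by
    intro k
    induction k with
    | zero =>
      refine ⟨fun _ => Classical.arbitrary _, Emb.of_cm (fun i hi j hj => ?_) mat_inj⟩
      obtain rfl : i = 0 := by omega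
      obtain rfl : j = 0 := by omega
      rw [cm_self]
      rfl
    | succ k ih =>
      obtain ⟨e', h'⟩ := ih
      exact hb.A_step hnm hsum hA (by omega) h'
  obtain ⟨e', h'⟩ := this ℓ
  have := h'.le_card
  omega

namespace Emb

variable {M : ℕ → ℕ → ℤ} {n : ℕ} {e : ℕ → Fin ℓ}

lemma of_att {i : ℕ} {q : ℤ} (h : R.Emb (att M n i q) (n + 1) e) : R.Emb M n e where
  cm_eq j hj k hk := by
    rw [h.cm_eq j (by omega) k (by omega), att, if_neg (by omega), if_neg (by omega)]
  inj j hj k hk := h.inj j (by omega) k (by omega)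

lemma prg_push (h : R.Emb M n e) (cc : ℕ → ℕ) (x : Fin ℓ) :
    R.prg (push e n cc) x = ∑ j ∈ Finset.range n, (cc j : ℤ) * R.cm (e j) x := by
  rw [h.prg_eq_sum fun x hx => exists_of_push_ne hx]
  exact Finset.sum_congr rfl fun j hj => by rw [h.push_apply _ (Finset.mem_range.1 hj)]

lemma prg_push_att {i : ℕ} {q : ℤ} (h : R.Emb (att M n i q) (n + 1) e) {k : ℕ} (hk : k ≤ n)
    (hik : i < k) {cc : ℕ → ℕ} (hcc : cc i = 1) : R.prg (push e k cc) (e n) = -1 := by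
  rw [(h.of_att.mono hk).prg_push, Finset.sum_eq_single i]
  · rw [h.cm_eq i (by omega) n (by omega), hcc, att, if_neg (by omega), if_pos rfl, if_pos rfl]
    rfl
  · intro j hj hji
    have := Finset.mem_range.1 hj
    rw [h.cm_eq j (by omega) n (by omega), att, if_neg (by omega), if_pos rfl, if_neg hji, mul_zero]
  · intro hi
    exact absurd (Finset.mem_range.2 hik) hi

lemma push_att {i : ℕ} {q : ℤ} (h : R.Emb (att M n i q) (n + 1) e) {k : ℕ} (hk : k ≤ n)
    (cc : ℕ → ℕ) : push e k cc (e n) = 0 :=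
  push_eq_zero fun j hj hjn => by
    have := h.inj j (by omega) n (by omega) hjn
    omega

lemma push_congr {e' : ℕ → Fin ℓ} (he : ∀ k < n, e' k = e k) {k : ℕ} (hk : k ≤ n)
    (cc : ℕ → ℕ) : push e' k cc = push e k cc := by
  funext x
  exact Finset.sum_congr rfl fun j hj => by
    rw [he j (lt_of_lt_of_le (Finset.mem_range.1 hj) hk)]

lemma norm_single (h : R.Emb M n e) {l : ℕ} (hl : l < n) :
    ⟪R.vec (push e n fun j => if j = l then 1 else 0),
      R.vec (push e n fun j => if j = l then 1 else 0)⟫ = R.nm (e l) := by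
  have : (push e n fun j => if j = l then 1 else 0) = Pi.single (e l) 1 := by
    funext x
    by_cases hx : ∃ i < n, e i = x
    · obtain ⟨i, hi, rfl⟩ := hx
      rw [h.push_apply _ hi, Pi.single_apply]
      have : (e i = e l) ↔ i = l := ⟨h.inj i hi l hl, fun h => by rw [h]⟩
      simp only [this]
    · push Not at hx
      rw [push_eq_zero hx, Pi.single_eq_of_ne (hx l hl).symm]
  rw [this, vec_single]
  rfl

lemma false_of_att {i : ℕ} {q : ℤ} (h : R.Emb (att M n i q) (n + 1) e) {k k' f : ℕ} (hk : k ≤ n)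
    (hk' : k' ≤ n) (hik : i < k) (hik' : i < k') {cc cc' : ℕ → ℕ} (hcc : cc i = 1)
    (hcc' : cc' i = 1) (hA : R.Adm (push e k' cc') (e f)) (hf : f < n)
    (hcf : f < k → cc f = 0) (hsub : ∀ j < k, cc j ≠ 0 → j < k' ∧ cc' j ≠ 0)
    (hn : ⟪R.vec (push e k cc), R.vec (push e k cc)⟫ +
      ⟪R.vec (push e k' cc'), R.vec (push e k' cc')⟫ ≤ R.nm (e n)) : False := by
  have h1 := hA.neg_one_le_prg_add (c := push e k cc) (j := e n) ?_ ?_ (h.push_att hk' cc') hn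
  · rw [h.prg_push_att hk hik hcc, h.prg_push_att hk' hik' hcc'] at h1
    norm_num at h1
  · intro x hx
    obtain ⟨j, hj, rfl⟩ := exists_of_push_ne hx
    rw [(h.of_att.mono hk).push_apply _ hj] at hx
    obtain ⟨h2, h3⟩ := hsub j hj hx
    rwa [(h.of_att.mono hk').push_apply _ h2]
  · by_cases hfk : f < k
    · rw [(h.of_att.mono hk).push_apply _ hfk, hcf hfk]
    · refine push_eq_zero fun j hj hjf => ?_
      have := h.inj j (by omega) f (by omega) hjf
      omega

lemma nm_chain {x y : ℤ} (h : R.Emb (mat 1 x y) n e) (i : ℕ) (hi : i + 1 < n) :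
    R.nm (e (i + 1)) = R.nm (e 1) := by
  induction i with
  | zero => rfl
  | succ i ih =>
    have h1 := h.nm_eq (i := i + 1) (j := i + 2) (by omega) hi
    simp [mat] at h1
    rw [h1, ih (by omega)]

lemma nm_zero {x y : ℤ} (h : R.Emb (mat 1 x y) n e) (hn : 2 ≤ n) :
    x * R.nm (e 1) = y * R.nm (e 0) := by
  have h1 := h.nm_eq (i := 0) (j := 1) (by omega) (by omega)
  simp [mat] at h1
  exact_mod_cast h1

end Emb

/-- The Cartan matrix of type `F₄`, the nodes `0` and `1` being long. -/
def matF (j i : ℕ) : ℤ :=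
  if j = i then 2 else if j = 1 ∧ i = 2 then -2 else if j + 1 = i ∨ i + 1 = j then -1 else 0

lemma Bad.false_of_F {b : Fin ℓ → ℕ} (hb : R.Bad b) {e : ℕ → Fin ℓ} (h : R.Emb matF 4 e)
    (hmin : ∀ j, R.nm (e 2) ≤ R.nm j) : False := by
  have n01 := h.nm_eq (i := 0) (j := 1) (by norm_num) (by norm_num)
  have n12 := h.nm_eq (i := 1) (j := 2) (by norm_num) (by norm_num)
  have n23 := h.nm_eq (i := 2) (j := 3) (by norm_num) (by norm_num)
  simp [matF] at n01 n12 n23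
  have hp := fun i => hb.pos (e i)
  have h12 : R.Emb (mat 1 2 1) 3 (e ∘ (· + 1)) := h.comp _ (by decide) (by decide)
    fun _ _ _ _ => mat_eq_two (by norm_num) (by norm_num)
  have hshort : ∀ k : ℕ, k ≤ 2 → ∀ i, k * R.nm (e 3) ≤ 2 * R.nm i := fun k hk i => by
    have hk' : (k : ℝ) ≤ 2 := by exact_mod_cast hk
    have := hmin i
    have := R.nm_pos (e 3)
    nlinarith
  have a1 : R.prg b (e 1) ≤ 0 := (hb.of_emb (h12.mono (show 2 ≤ 3 by norm_num))
    (cc := fun _ => 1) (f := 0) (by decide) (by norm_num) (by decide)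
    (fun i => by have := hmin i; simp; linarith) fun i _ => by
      have := hp (i + 1); simp; omega).1
  have h0 := (h.mono (show 3 ≤ 4 by norm_num)).adm (cc := fun _ => 1) (f := 0) (by decide)
    (by norm_num) (by decide) (fun i => by have := hmin i; simp; linarith)
  have a0 : R.prg b (e 0) ≤ 0 := hb.prg_le _ _ h0 (push_le (h.mono (by norm_num)) fun i _ => by
    have := hp i; omega)
  have a2 : 2 ≤ b (e 2) → R.prg b (e 2) ≤ 0 := fun h2 => (hb.of_emb h12
    (cc := fun j => [1, 2, 1].getD j 0) (f := 1) (by decide) (by norm_num) (by decide)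
    (fun i => by have := hmin i; simp; linarith) fun i hi => by
      have := hp (i + 1)
      interval_cases i <;> norm_num at this ⊢ <;> omega).1
  have hF := h.adm (cc := fun j => [1, 2, 3, 2].getD j 0) (f := 3) (by decide)
    (by norm_num) (by decide) (fun i => hshort 2 le_rfl i)
  by_cases hfull : ∃ x, ∀ i < 4, e i ≠ x
  · obtain ⟨e', i, q, hi, hcc, hq, he', hE, hn⟩ := h.exists_att hb.not_three
      (cc := fun j => [1, 2, 3, 2].getD j 0) (by decide) hF.ne_zero hF.norm_le hfull
    obtain rfl : i = 0 := by interval_cases i <;> simp_all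
    have h1 := h0.norm_eq
    have h2 := hF.norm_eq
    rw [(h.mono (by norm_num)).push_apply _ (by norm_num), ← Emb.push_congr he' (by norm_num)] at h1
    rw [h.push_apply _ (by norm_num), ← Emb.push_congr he' le_rfl] at h2
    rw [← Emb.push_congr he' le_rfl, ← he' 3 (by norm_num)] at hF
    refine hE.false_of_att (k := 3) (cc := fun _ => 1) (by norm_num) le_rfl (by norm_num)
      (by norm_num) rfl rfl hF (by norm_num) (by norm_num) (by decide) ?_
    have h3 := R.nm_pos (e 2)
    rw [hn, he' 0 (by norm_num)]
    change _ = ((2 : ℕ) : ℝ) * _ at h2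
    rcases hq with rfl | rfl <;> push_cast at h1 h2 ⊢ <;> linarith
  · have A0 := h.prg_onto hfull b (i := 0) (by norm_num)
    have A1 := h.prg_onto hfull b (i := 1) (by norm_num)
    have A2 := h.prg_onto hfull b (i := 2) (by norm_num)
    simp [Finset.sum_range_succ, matF] at A0 A1 A2
    have h4 : ¬ (2 ≤ b (e 1) ∧ 3 ≤ b (e 2) ∧ 2 ≤ b (e 3)) := fun ⟨h1, h2, h3⟩ => by
      obtain ⟨x, hx⟩ := hb.not_full _ _ hF (push_le h fun i hi => by
        have := hp i
        interval_cases i <;> simp <;> omega)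
      push Not at hfull
      obtain ⟨i, hi, rfl⟩ := hfull x
      rw [h.push_apply _ hi] at hx
      interval_cases i <;> simp at hx
    have := hp 0
    have := hp 1
    have := hp 2
    have := hp 3
    lia

/-- A type `B` embedding extends to a larger one. -/
lemma Bad.B_step {b : Fin ℓ → ℕ} (hb : R.Bad b) {n : ℕ} (hn : 3 ≤ n) {e : ℕ → Fin ℓ}
    (h : R.Emb (mat 1 1 2) n e) (hmin : ∀ j, R.nm (e 0) ≤ R.nm j) :
    ∃ e', R.Emb (mat 1 1 2) (n + 1) e' ∧ ∀ j, R.nm (e' 0) ≤ R.nm j := by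
  have n0 := h.nm_zero (by omega)
  have n1 : ∀ i, 1 ≤ i → i < n → R.nm (e i) = 2 * R.nm (e 0) := fun i hi hin => by
    obtain ⟨i, rfl⟩ := Nat.exists_eq_add_of_le' hi
    rw [h.nm_chain i hin]
    push_cast at n0
    linarith
  have hsum : ∀ k, 2 ≤ k → ∀ i < k, ∑ j ∈ Finset.range k, ((1 : ℕ) : ℤ) * mat 1 1 2 j i =
      if i = k - 1 then 1 else 0 := fun k hk i hi => by
    have h1 := sum_mat (G := fun j => if j < k then 1 else 0) one_ne_zero 1 2
      (fun j hj => if_neg (not_lt.2 hj)) i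
    rw [Finset.sum_congr rfl fun j hj => by
      rw [show ((1 : ℕ) : ℤ) = (if j < k then 1 else 0) by simp [Finset.mem_range.1 hj]], h1]
    grind
  have hshort : ∀ k, 2 ≤ k → k ≤ n → ∀ j, ((1 : ℕ) : ℝ) * R.nm (e (k - 1)) ≤ 2 * R.nm j :=
    fun k hk hkn j => by
      rw [n1 _ (by omega) (by omega)]
      have := hmin j
      push_cast
      linarith
  have hA : ∀ k, 2 ≤ k → k ≤ n → R.Adm (push e k fun _ => 1) (e (k - 1)) := fun k hk hkn =>
    (h.mono hkn).adm (fun _ _ => one_ne_zero) (by omega) (hsum k hk) (hshort k hk hkn)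
  have hnorm : ∀ k, 1 ≤ k → k ≤ n →
      ⟪R.vec (push e k fun _ => 1), R.vec (push e k fun _ => 1)⟫ = R.nm (e 0) := fun k hk hkn => by
    obtain rfl | hk2 := eq_or_lt_of_le hk
    · have h1 := (h.mono hkn).norm_single (l := 0) zero_lt_one
      have h2 : (push e 1 fun _ => 1) = push e 1 fun j => if j = 0 then 1 else 0 := by
        funext x
        simp only [push, Finset.sum_range_one, if_pos]
      rwa [h2]
    · have h1 := (hA k hk2 hkn).norm_eq
      rw [(h.mono hkn).push_apply _ (by omega), n1 _ (by omega) (by omega)] at h1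
      push_cast at h1
      linarith
  obtain ⟨e', i, q, hi, -, hq, he', hE, hnn⟩ := hb.exists_att h (cc := fun _ => 1)
    (fun _ _ => one_ne_zero) (by omega) (hsum n (by omega)) (hshort n (by omega) le_rfl)
    (hb.of_emb h (cc := fun _ => 1) (fun _ _ => one_ne_zero) (by omega) (hsum n (by omega))
      (hshort n (by omega) le_rfl) fun i _ => by have := hb.pos (e i); omega).2
  have hpos := R.nm_pos (e 0)
  rw [he' i hi] at hnn
  by_cases hin : i + 1 = n
  · rw [n1 i (by omega) hi] at hnn
    rcases hq with rfl | rfl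
    · refine ⟨_, hE.comp id (fun j hj => hj) (fun j hj k hk => ?_) fun _ _ _ _ =>
        mat_eq_two (by norm_num) (by norm_num), fun j => ?_⟩
      · simp only [att, mat, id]
        grind
      · rw [Function.comp, id, he' 0 (by omega)]
        exact hmin j
    · have h1 := R.nm_lt_of_prg_eq (hE.push_att le_rfl _)
        (hE.prg_push_att le_rfl hi (cc := fun _ => 1) rfl)
      rw [Emb.push_congr he' le_rfl, hnorm n (by omega) le_rfl, hnn] at h1
      push_cast at h1
      linarith
  · by_cases hcase : i = 0 ∧ q = 1
    · obtain ⟨rfl, rfl⟩ := hcase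
      refine (hb.false_of_F (hE.comp (fun j => [2, 1, 0, n].getD j 0) (fun j hj => ?_)
        (fun j hj k hk => ?_) fun j hj k hk hjk => ?_) fun j => ?_).elim
      · interval_cases j <;> simp <;> omega
      · interval_cases j <;> interval_cases k <;> simp [att, mat, matF] <;> grind
      · revert hjk
        interval_cases j <;> interval_cases k <;> simp [matF]
      · simp only [Function.comp]
        rw [he' _ (by simp; omega)]
        exact hmin j
    · have hA' := hA (i + 2) (by omega) (by omega)
      rw [← Emb.push_congr he' (by omega), ← he' _ (by omega)] at hA'
      refine (hE.false_of_att (k := i + 1) (cc := fun _ => 1) (by omega) (by omega) (by omega)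
        (by omega) rfl rfl hA' (by omega) (by omega)
        (fun j hj _ => ⟨by omega, one_ne_zero⟩) ?_).elim
      rw [Emb.push_congr he' (by omega), Emb.push_congr he' (by omega), hnorm _ (by omega)
        (by omega), hnorm _ (by omega) (by omega), hnn]
      by_cases hi0 : i = 0
      · obtain rfl : q = 2 := hq.resolve_left fun h => hcase ⟨hi0, h⟩
        rw [hi0]
        push_cast
        linarith
      · rw [n1 i (by omega) hi]
        rcases hq with rfl | rfl <;> push_cast <;> linarith

lemma Bad.false_of_B {b : Fin ℓ → ℕ} (hb : R.Bad b) {e : ℕ → Fin ℓ}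
    (h : R.Emb (mat 1 1 2) 3 e) (hmin : ∀ j, R.nm (e 0) ≤ R.nm j) : False := by
  have : ∀ k, ∃ e', R.Emb (mat 1 1 2) (k + 3) e' ∧ ∀ j, R.nm (e' 0) ≤ R.nm j := by
    intro k
    induction k with
    | zero => exact ⟨e, h, hmin⟩
    | succ k ih =>
      obtain ⟨e', h', hmin'⟩ := ih
      exact hb.B_step (by omega) h' hmin'
  obtain ⟨e', h', -⟩ := this ℓ
  have := h'.le_card
  omega

/-- The coefficients of the highest short root of type `C`. -/
def coeffC (k j : ℕ) : ℕ := if j = 0 ∨ j + 1 = k then 1 else 2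

lemma coeffC_ne_zero (k j : ℕ) : coeffC k j ≠ 0 := by
  unfold coeffC
  split_ifs <;> decide

lemma sum_coeffC {k : ℕ} (hk : 2 ≤ k) (i : ℕ) (hi : i < k) :
    ∑ j ∈ Finset.range k, (coeffC k j : ℤ) * mat 1 2 1 j i = if i = k - 2 then 1 else 0 := by
  have h1 := sum_mat (G := fun j => if j < k then (coeffC k j : ℤ) else 0) one_ne_zero 2 1
    (fun j hj => if_neg (not_lt.2 hj)) i
  rw [Finset.sum_congr rfl fun j hj => by
    rw [show (coeffC k j : ℤ) = (if j < k then (coeffC k j : ℤ) else 0) by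
      simp [Finset.mem_range.1 hj]], h1]
  simp only [coeffC]
  grind

lemma false_of_C {n : ℕ} (hn : 2 ≤ n) {B a : ℕ → ℤ} (h0 : 1 ≤ B 0) (a0 : a 0 = 2 * B 0 - B 1)
    (a1 : 3 ≤ n → a 1 = 2 * B 1 - 2 * B 0 - B 2)
    (ha : ∀ i, i + 3 < n → a (i + 2) = 2 * B (i + 2) - B (i + 1) - B (i + 3))
    (h : ∀ k, 2 ≤ k → k ≤ n → (∀ j, 1 ≤ j → j + 2 ≤ k → 2 ≤ B j) → a (k - 2) ≤ 0 ∧ k ≠ n) :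
    False := by
  have key : ∀ k, k + 2 ≤ n → (∀ j, 1 ≤ j → j ≤ k + 1 → 2 ≤ B j) ∧
      (if k = 0 then 2 * B 0 else B k) ≤ B (k + 1) := by
    intro k
    induction k with
    | zero =>
      intro _
      have h1 := (h 2 le_rfl hn fun j h1 h2 => by omega).1
      rw [a0] at h1
      refine ⟨fun j h2 h3 => ?_, ?_⟩
      · obtain rfl : j = 1 := by omega
        omega
      · simp only [if_true, zero_add]
        omega
    | succ k ih =>
      intro hk
      obtain ⟨h1, h2⟩ := ih (by omega)
      have h3 := (h (k + 3) (by omega) (by omega) fun j h3 h4 => h1 j h3 (by omega))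
      have h4 : B (k + 1) ≤ B (k + 2) := by
        rcases k with _ | k
        · have := a1 (by omega)
          change a 1 ≤ 0 ∧ _ at h3
          simp at h2 ⊢
          omega
        · have := ha k (by omega)
          have h5 : B (k + 1) ≤ B (k + 2) := by simpa using h2
          change a (k + 2) ≤ 0 ∧ _ at h3
          change B (k + 2) ≤ B (k + 3)
          omega
      refine ⟨fun j h5 h6 => ?_, by simpa using h4⟩
      by_cases hj : j = k + 2
      · rw [hj]
        exact (h1 (k + 1) (by omega) le_rfl).trans h4
      · exact h1 j h5 (by omega)
  exact (h n hn le_rfl fun j h1 h2 => (key (n - 2) (by omega)).1 j h1 (by omega)).2 rfl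

lemma Emb.nm_C {n : ℕ} {e : ℕ → Fin ℓ} (h : R.Emb (mat 1 2 1) n e) {i : ℕ} (hi : i < n)
    (hn : 2 ≤ n) : R.nm (e i) = (if i = 0 then 2 else 1) * R.nm (e 1) := by
  rcases i with _ | i
  · have := h.nm_zero hn
    push_cast at this
    simp only [if_true]
    linarith
  · rw [h.nm_chain i hi]
    simp

lemma Emb.short_C {n : ℕ} {e : ℕ → Fin ℓ} (h : R.Emb (mat 1 2 1) n e) (hn : 2 ≤ n)
    (hmin : ∀ j, R.nm (e 1) ≤ R.nm j) (i : Fin ℓ) :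
    coeffC n (n - 2) * R.nm (e (n - 2)) ≤ 2 * R.nm i := by
  have h1 := hmin i
  rw [h.nm_C (by omega) hn, coeffC]
  split_ifs <;> first | omega | (push_cast; linarith)

lemma Emb.adm_C {n : ℕ} {e : ℕ → Fin ℓ} (h : R.Emb (mat 1 2 1) n e) (hn : 2 ≤ n)
    (hmin : ∀ j, R.nm (e 1) ≤ R.nm j) : R.Adm (push e n (coeffC n)) (e (n - 2)) :=
  h.adm (fun i _ => coeffC_ne_zero n i) (by omega) (sum_coeffC hn) (h.short_C hn hmin)

lemma Emb.norm_C {n : ℕ} {e : ℕ → Fin ℓ} (h : R.Emb (mat 1 2 1) n e) (hn : 2 ≤ n)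
    (hmin : ∀ j, R.nm (e 1) ≤ R.nm j) :
    ⟪R.vec (push e n (coeffC n)), R.vec (push e n (coeffC n))⟫ = R.nm (e 1) := by
  have h1 := (h.adm_C hn hmin).norm_eq
  rw [h.push_apply _ (by omega), h.nm_C (by omega) hn, coeffC] at h1
  split_ifs at h1 <;> first | omega | (push_cast at h1; linarith)

lemma Bad.C_onto {b : Fin ℓ → ℕ} (hb : R.Bad b) {n : ℕ} (hn : 2 ≤ n) {e : ℕ → Fin ℓ}
    (h : R.Emb (mat 1 2 1) n e) (hmin : ∀ j, R.nm (e 1) ≤ R.nm j) : ∃ x, ∀ i < n, e i ≠ x := by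
  by_contra honto
  have ha : ∀ i < n, R.prg b (e i) = _ := fun i hi => by
    rw [h.prg_onto honto b hi, sum_mat (G := fun j => if j < n then (b (e j) : ℤ) else 0)
      one_ne_zero 2 1 fun j hj => if_neg (by omega)]
  have hp : ∀ i, 1 ≤ b (e i) := fun i => Nat.one_le_iff_ne_zero.2 (hb.pos _)
  refine false_of_C hn (B := fun j => if j < n then (b (e j) : ℤ) else 0)
    (a := fun i => R.prg b (e i)) ?_ ?_ ?_ ?_ fun k hk hkn hB => ?_
  · have := hp 0
    split_ifs <;> omega
  · simp only [ha 0 (by omega), if_true, one_mul]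
  · intro hn3
    simp [ha 1 (by omega)]
  · intro i hi
    simp [ha (i + 2) (by omega)]
  · have hA := (h.mono hkn).adm_C hk hmin
    have hle : ∀ x, push e k (coeffC k) x ≤ b x := push_le (h.mono hkn) fun i hi => by
      have h1 := hp i
      have h2 := hB i
      simp only [coeffC]
      split_ifs with h3
      · exact h1
      · have := h2 (by omega) (by omega)
        rw [if_pos (by omega)] at this
        exact_mod_cast this
    refine ⟨hb.prg_le _ _ hA hle, ?_⟩
    rintro rfl
    obtain ⟨x, hx⟩ := hb.not_full _ _ hA hle
    push Not at honto
    obtain ⟨i, hi, rfl⟩ := honto x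
    rw [h.push_apply _ hi] at hx
    exact coeffC_ne_zero _ _ hx

/-- A type `C` embedding extends to a larger one. -/
lemma Bad.C_step {b : Fin ℓ → ℕ} (hb : R.Bad b) {n : ℕ} (hn : 2 ≤ n) {e : ℕ → Fin ℓ}
    (h : R.Emb (mat 1 2 1) n e) (hmin : ∀ j, R.nm (e 1) ≤ R.nm j) :
    ∃ e', R.Emb (mat 1 2 1) (n + 1) e' ∧ ∀ j, R.nm (e' 1) ≤ R.nm j := by
  obtain ⟨e', i, q, hi, hcc, hq, he', hE, hnn⟩ := hb.exists_att h (fun i _ => coeffC_ne_zero n i)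
    (by omega) (sum_coeffC hn) (h.short_C hn hmin) (hb.C_onto hn h hmin)
  have hpos := R.nm_pos (e 1)
  have hnorm := h.norm_C hn hmin
  rw [← Emb.push_congr he' le_rfl] at hnorm
  rw [he' i hi, h.nm_C hi hn] at hnn
  by_cases hi0 : i = 0
  · subst hi0
    rcases hq with rfl | rfl
    · by_cases hn2 : n = 2
      · subst hn2
        refine (hb.false_of_B (hE.comp (fun j => [1, 0, 2].getD j 0) (fun j hj => ?_)
          (fun j hj k hk => ?_) fun _ _ _ _ => mat_eq_two (by norm_num) (by norm_num))
          fun j => ?_).elim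
        · interval_cases j <;> simp
        · interval_cases j <;> interval_cases k <;> simp [att, mat]
        · exact (congrArg R.nm (he' 1 (by omega))).trans_le (hmin j)
      · refine (hb.false_of_F (hE.comp (fun j => [n, 0, 1, 2].getD j 0) (fun j hj => ?_)
          (fun j hj k hk => ?_) fun j hj k hk hjk => ?_) fun j => ?_).elim
        · interval_cases j <;> simp <;> omega
        · interval_cases j <;> interval_cases k <;> simp [att, mat, matF] <;> grind
        · revert hjk
          interval_cases j <;> interval_cases k <;> simp [matF]
        · exact (congrArg R.nm (he' 1 (by omega))).trans_le (hmin j)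
    · have h1 := R.nm_lt_of_prg_eq (hE.push_att le_rfl _) (hE.prg_push_att le_rfl hi hcc)
      rw [hnorm, hnn] at h1
      push_cast at h1
      linarith
  · have hin : i + 1 = n := by
      unfold coeffC at hcc
      split_ifs at hcc <;> omega
    rcases hq with rfl | rfl
    · refine ⟨_, hE.comp id (fun j hj => hj) (fun j hj k hk => ?_) fun _ _ _ _ =>
        mat_eq_two (by norm_num) (by norm_num), fun j => ?_⟩
      · simp only [att, mat, id]
        grind
      · rw [Function.comp, id, he' 1 (by omega)]
        exact hmin j
    · have hA := h.adm_C hn hmin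
      rw [← Emb.push_congr he' le_rfl, ← he' _ (by omega)] at hA
      have h1 := h.norm_single hi
      rw [← Emb.push_congr he' le_rfl, h.nm_C hi hn] at h1
      refine (hE.false_of_att (cc := fun j => if j = i then 1 else 0) le_rfl le_rfl hi hi
        (if_pos rfl) hcc hA (by omega)
        (fun _ => if_neg (by omega)) (fun j hj _ => ⟨hj, coeffC_ne_zero n j⟩) ?_).elim
      rw [h1, hnorm, hnn, if_neg hi0]
      push_cast
      linarith

lemma Bad.false_of_C {b : Fin ℓ → ℕ} (hb : R.Bad b) {e : ℕ → Fin ℓ}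
    (h : R.Emb (mat 1 2 1) 2 e) (hmin : ∀ j, R.nm (e 1) ≤ R.nm j) : False := by
  have : ∀ k, ∃ e', R.Emb (mat 1 2 1) (k + 2) e' ∧ ∀ j, R.nm (e' 1) ≤ R.nm j := by
    intro k
    induction k with
    | zero => exact ⟨e, h, hmin⟩
    | succ k ih =>
      obtain ⟨e', h', hmin'⟩ := ih
      exact hb.C_step (by omega) h' hmin'
  obtain ⟨e', h', -⟩ := this ℓ
  have := h'.le_card
  omega

/-- Two simple roots of different lengths yield a contradiction. -/
lemma Bad.false_of_nm_ne {b : Fin ℓ → ℕ} (hb : R.Bad b) {i j : Fin ℓ} (hij : R.nm i ≠ R.nm j) :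
    False := by
  obtain ⟨t, -, ht⟩ := Finset.univ.exists_min_image R.nm ⟨i, Finset.mem_univ i⟩
  have hmin : ∀ j, R.nm t ≤ R.nm j := fun j => ht j (Finset.mem_univ j)
  by_cases hS : ∀ x, R.nm x = R.nm t → ∀ y, R.nm y ≠ R.nm t → ⟪R.simple x, R.simple y⟫ = 0
  · have h := R.irred (Finset.univ.filter fun x => R.nm x = R.nm t) ⟨t, by simp⟩
      fun x hx y hy => hS x (by simpa using hx) y (by simpa using hy)
    have h' : ∀ x, R.nm x = R.nm t := fun x => by
      have := h ▸ Finset.mem_univ x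
      simpa using this
    exact hij ((h' i).trans (h' j).symm)
  · push Not at hS
    obtain ⟨x, hx, y, hy, hxy⟩ := hS
    have hne : x ≠ y := fun h => hy (h ▸ hx)
    have hlt : R.nm x < R.nm y := lt_of_le_of_ne (hx ▸ hmin y) fun h => hy (h ▸ hx)
    have hpos := R.nm_pos x
    have hc := R.cm_mul_nm_comm x y
    have h0 : R.cm x y ≠ 0 := fun h => hxy ((R.cm_eq_zero_iff_inner x y).1 h)
    have hcases : R.cm x y = -1 ∧ R.cm y x = -2 := by
      rcases R.cm_cases hb.not_three hne with h | h | h | h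
      · exact absurd h.1 h0
      · rw [h.1, h.2] at hc
        push_cast at hc
        linarith
      · exact h
      · rw [h.1, h.2] at hc
        push_cast at hc
        linarith
    refine hb.false_of_C (e := fun k => if k = 0 then y else x) (Emb.of_cm (fun i hi j hj => ?_)
      fun _ _ _ _ => mat_eq_two (by norm_num) (by norm_num)) fun j => hx ▸ hmin j
    interval_cases i <;> interval_cases j <;> simp [mat, cm_self, hcases]

end RootSystemData

/-- The support lemma: if `Φ` is not of type A or G₂, `β ≥ Σᵢ αᵢ`,
`ht₀⁺(β) ≤ 2` and the full index set is not in `I(β)` (no highest short root of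
the whole system lies below `β`), then there is an irreducible non-type-A
subset `I` with `θ_I ≤ β` whose associated fundamental-weight index `f(I)`
carries a positive coefficient `a_{f(I)} = ⟨β, α_{f(I)}∨⟩ > 0`, where
`θ_I = ω_{f(I)} - η` with `η` dominant supported away from `I`. -/
theorem statement16 (hℓ : 0 < ℓ) (R : RootSystemData ℓ E)
    (hA : ¬ R.IsTypeASub Finset.univ)
    (hG2 : ∀ i j : Fin ℓ, cpair (R.simple i) (R.simple j) ≠ -3)
    (ω : Fin ℓ → E)
    (hω : ∀ i j, cpair (ω i) (R.simple j) = if i = j then 1 else 0)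
    (hspan : ∀ i, ∃ c : Fin ℓ → ℝ, ω i = ∑ j, c j • R.simple j)
    (β : E) (hβ : R.wle (∑ i, R.simple i) β)
    (I0 : Finset (Fin ℓ)) (h0 : (⟨0, hℓ⟩ : Fin ℓ) ∈ I0)
    (hSL : R.SimplyLaced I0) (hConn : R.Connected I0)
    (hmax : ∀ S : Finset (Fin ℓ), I0 ⊆ S → (⟨0, hℓ⟩ : Fin ℓ) ∈ S →
      R.SimplyLaced S → R.Connected S → S = I0)
    (hht1 : ¬ R.IsF4 → ∑ i ∈ I0, max (cpair β (R.simple i)) 0 ≤ 2)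
    (hht2 : ∀ e : Fin 4 ≃o Fin ℓ,
      (∀ a b : Fin 4, cpair (R.simple (e b)) (R.simple (e a)) = F4Cartan a b) →
      max (max (cpair β (R.simple (e 0))) 0 + max (cpair β (R.simple (e 1))) 0)
          (max (cpair β (R.simple (e 2))) 0 + max (cpair β (R.simple (e 3))) 0)
        ≤ 2)
    (hnotfull : ∀ θ, R.IsHighestShortRoot Finset.univ θ → ¬ R.wle θ β) :
    ∃ (I : Finset (Fin ℓ)) (θ η : E) (f : Fin ℓ),
      R.Connected I ∧ ¬ R.IsTypeASub I ∧ R.IsHighestShortRoot I θ ∧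
      R.wle θ β ∧ R.IsDominant η ∧ (∀ i ∈ I, cpair η (R.simple i) = 0) ∧
      θ = ω f - η ∧ 0 < cpair β (R.simple f) := by
  classical
  have : Nonempty (Fin ℓ) := ⟨⟨0, hℓ⟩⟩
  obtain ⟨w, hw⟩ := R.exists_inner_pos_of_dual hω
  obtain ⟨d, hd⟩ := hβ
  have hvec : β = R.vec (fun i => 1 + d i) := by
    rw [sub_eq_iff_eq_add'] at hd
    rw [hd, RootSystemData.vec, ← Finset.sum_add_distrib]
    exact Finset.sum_congr rfl fun i _ => by push_cast; rw [add_smul, one_smul]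
  have hp : ∀ i, cpair β (R.simple i) = (R.prg (fun i => 1 + d i) i : ℝ) := fun i => by
    rw [hvec, R.cpair_vec]
  have hle : ∀ c : Fin ℓ → ℕ, (∀ i, c i ≤ 1 + d i) → R.wle (R.vec c) β := fun c hc => by
    refine ⟨fun i => 1 + d i - c i, ?_⟩
    rw [hvec, RootSystemData.vec, RootSystemData.vec, ← Finset.sum_sub_distrib]
    exact Finset.sum_congr rfl fun i _ => by rw [← sub_smul, Nat.cast_sub (hc i)]
  by_contra hno
  have hb : R.Bad fun i => 1 + d i := by
    refine ⟨fun i => by omega, fun c f hc hcb => ?_, fun c f hc hcb => ?_, hG2⟩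
    · by_contra! hpos
      obtain ⟨η, hη, hη0, hηω⟩ := hc.exists_dominant hω hw
      refine hno ⟨RootSystemData.supp c, R.vec c, η, f, hc.connected, hc.not_isTypeASub,
        hc.isHighestShortRoot hw, hle c hcb, hη, hη0, hηω, ?_⟩
      rw [hp]
      exact_mod_cast hpos
    · by_contra! hpos
      have hs : RootSystemData.supp c = Finset.univ :=
        Finset.eq_univ_of_forall fun i => RootSystemData.mem_supp.2 (hpos i)
      exact hnotfull _ (hs ▸ hc.isHighestShortRoot hw) (hle c hcb)
  by_cases hnm : ∀ i j, R.nm i = R.nm j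
  · have hcm : ∀ i j, i ≠ j → R.cm i j = 0 ∨ R.cm i j = -1 := fun i j hij => by
      have h1 := R.cm_mul_nm_comm i j
      rw [hnm i j] at h1
      have h2 : R.cm i j = R.cm j i := by
        exact_mod_cast mul_right_cancel₀ (R.nm_pos j).ne' h1
      rcases R.cm_cases hG2 hij with h | h | h | h <;> omega
    have huniv : Finset.univ = I0 := hmax _ (Finset.subset_univ _) (Finset.mem_univ _)
      (fun i _ j _ hij => by
        rw [R.cpair_simple]
        exact_mod_cast hcm i j hij)
      ⟨Finset.univ_nonempty, fun S _ hS h => R.irred S hS fun i hi j hj =>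
        h i hi j (Finset.mem_univ j) hj⟩
    have hF4 : ¬ R.IsF4 := fun ⟨e, he⟩ => by
      have h1 := he 2 1
      rw [R.cpair_simple, show F4Cartan 2 1 = -2 from rfl] at h1
      rcases hcm (e 1) (e 2) (by simp) with h | h <;>
        · rw [h] at h1
          norm_num at h1
    have hs := hht1 hF4
    rw [← huniv] at hs
    simp only [hp] at hs
    exact hb.false_of_simplyLaced hnm (by exact_mod_cast hs) hA
  · push Not at hnm
    obtain ⟨i, j, hij⟩ := hnm
    exact hb.false_of_nm_ne hij
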